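/- arXiv:1312.6563 — 2 statements merged into one kernel-verified Lean document; each statement's English description precedes it below -/
import Mathlib

section
/- Let X be a Polish ultrametric space. Suppose that every FD family 𝓑 in X can be strengthened to an FD family 𝓑' such that X has the 𝓑'-extremality property. Then Iso(X) has a neighborhood basis at the identity consisting of open subgroups with ample generics. -/
/-!
A neighborhood of the identity contains `τ(1, 𝓑₀)` for some FD family `𝓑₀`, and `𝓑₀` is
strengthened to an extremal family `𝓑`. The stabilizer `H = τ(1, 𝓑)` is an open subgroup, and it
has ample generics. This rests on the following ingredients.

*Homogeneity* (`homog`). `H` is closed under gluing isometries from pieces of its members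
(`Glued`). For such a group, any finite partial isometry which moves points within orbits of the
group extends to a member of the group.

*Extension property* (`eppa`). Every finite set lies in a finite set `V'` on which the partial
isometries induced by members of `H` on the original set are restrictions of permutations of `V'`
induced by members of `H`. Hence tuples permuting a finite set `V'` are dense in `H ^ (n + 1)`.

*Removing finite orbits* (`finPart_ext`). Let `L₁` be the group of members of `H` moving the points
of `V'` by less than `δ`. Its subgroup `L` fixing all balls with finite `L₁`-orbits is open,
normalized by the given tuple `g`, and every ball has one or infinitely many translates under `L`.
This is where strengthening to extremal families is used.

*Generic position* (`indep`, `common_conjugate`). If all orbits of balls under `L` are trivial or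
infinite, then by Neumann's covering lemma a finite set `A` has a translate `h A`, `h ∈ L`, which is
as far from `A` as possible. Therefore two tuples in `∏ g i L` can be prescribed simultaneously on
`A` and on `h A`, so any two open subsets of `∏ g i L` are connected by conjugation with a member
of `L`. The same argument with `L = H`, `g = 1` connects any two open sets of tuples.

*A criterion for comeager orbits* (`comeager_orbit`). These two connection properties make
comeagerly many tuples have a dense orbit and be locally dense (each `V`-orbit, `V` a neighborhood
of the identity, is dense around the tuple). A back-and-forth argument, which uses completeness of
`Iso(X)`, shows that all such tuples are conjugate.
-/

open Metric Set Topology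

namespace UltraGen

variable {X : Type*} [MetricSpace X]

/-- `B` is a ball of radius `r` (i.e. `B = ball x r` for some center, with `r > 0`). -/
def IsBallRad (B : Set X) (r : ℝ) : Prop := 0 < r ∧ ∃ x : X, B = Metric.ball x r

/-- `B` is a ball in `X`. -/
def IsBall (B : Set X) : Prop := ∃ r, IsBallRad B r

/-- An FD family: a finite family of pairwise disjoint balls. -/
def FDFamily (𝓑 : Set (Set X)) : Prop :=
  𝓑.Finite ∧ (∀ B ∈ 𝓑, IsBall B) ∧ 𝓑.Pairwise fun B B' => Disjoint B B'

/-- τ(g,𝓑) = {g' ∈ Iso(X) : g'[B] = g[B] for all B ∈ 𝓑}. -/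
def tau (g : X ≃ᵢ X) (𝓑 : Set (Set X)) : Set (X ≃ᵢ X) :=
  {g' | ∀ B ∈ 𝓑, g' '' B = g '' B}

/-- 𝓑' strengthens 𝓑 iff τ(Id,𝓑') ⊆ τ(Id,𝓑). -/
def Strengthens (𝓑' 𝓑 : Set (Set X)) : Prop :=
  tau (1 : X ≃ᵢ X) 𝓑' ⊆ tau (1 : X ≃ᵢ X) 𝓑

/-- 𝒪^𝓑(C) = {g[C] : g ∈ τ(Id,𝓑)}. -/
def orb (𝓑 : Set (Set X)) (C : Set X) : Set (Set X) :=
  (fun g : X ≃ᵢ X => g '' C) '' tau (1 : X ≃ᵢ X) 𝓑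

/-- A ball `C` is 𝓑-extremal in `X` if 𝒪^𝓑(C) is infinite or a singleton. -/
def Extremal (𝓑 : Set (Set X)) (C : Set X) : Prop :=
  (orb 𝓑 C).Infinite ∨ ∃ D, orb 𝓑 C = {D}

/-- `X` has the 𝓑-extremality property if every ball in `X` is 𝓑-extremal in `X`. -/
def ExtremalityProperty (X : Type*) [MetricSpace X] (𝓑 : Set (Set X)) : Prop :=
  ∀ C : Set X, IsBall C → Extremal 𝓑 C

/-- `C` is a ball of radius `r` which is r-maximal 𝓑-non-extremal in `X`:
`C` is 𝓑-non-extremal and every ball of radius `r' > r` containing `C` is 𝓑-extremal. -/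
def RMaxNonExtremalRad (𝓑 : Set (Set X)) (C : Set X) (r : ℝ) : Prop :=
  IsBallRad C r ∧ ¬ Extremal 𝓑 C ∧
  ∀ (C' : Set X) (r' : ℝ), r < r' → IsBallRad C' r' → C ⊆ C' → Extremal 𝓑 C'

/-- `C` is r-maximal 𝓑-non-extremal in `X` (for some radius of `C`). -/
def RMaxNonExtremal (𝓑 : Set (Set X)) (C : Set X) : Prop :=
  ∃ r, RMaxNonExtremalRad 𝓑 C r

/-- Distance between two subsets of `X`. -/
noncomputable def setDist (A B : Set X) : ℝ :=
  sInf ((fun p : X × X => dist p.1 p.2) '' A ×ˢ B)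

/-- Two subsets are similar if some isometry of `X` maps one onto the other. -/
def Similar (A B : Set X) : Prop := ∃ g : X ≃ᵢ X, g '' A = B

/-- `[B]` for a ball `B` of radius `r`: `B` together with all balls `B'` of radius `r`
similar to `B` with `dist(B,B') = r`. -/
def ballClass (B : Set X) (r : ℝ) : Set (Set X) :=
  insert B {B' | (∃ x : X, B' = Metric.ball x r) ∧ Similar B B' ∧ setDist B B' = r}

/-- `g` permutes a finite set `Z`. -/
def PermutesSet (g : X ≃ᵢ X) (Z : Set X) : Prop := g '' Z = Z

/-- `g` permutes an FD family 𝓑. -/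
def PermutesFam (g : X ≃ᵢ X) (𝓑 : Set (Set X)) : Prop :=
  (fun B => g '' B) '' 𝓑 = 𝓑

/-- The topology of pointwise convergence on the isometry group of `X`. -/
instance isoTopology (X : Type*) [PseudoEMetricSpace X] : TopologicalSpace (X ≃ᵢ X) :=
  TopologicalSpace.induced (fun g => (g : X → X)) Pi.topologicalSpace

/-- A topological group has ample generics if each diagonal conjugation action
on `G^(n+1)` has a comeager orbit. -/
def HasAmpleGenerics (G : Type*) [Group G] [TopologicalSpace G] : Prop :=
  ∀ n : ℕ, ∃ v : Fin (n + 1) → G,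
    {w : Fin (n + 1) → G | ∃ g : G, ∀ i, w i = g * v i * g⁻¹} ∈ residual (Fin (n + 1) → G)

/-! ### Isometries glued from a group -/

/-- A subgroup of `Iso(X)` is *glued* if it contains every isometry which at each point agrees
with some member of the group. Stabilizers of families of balls have this property. -/
def Glued (L : Subgroup (X ≃ᵢ X)) : Prop :=
  ∀ g : X ≃ᵢ X, (∀ x, ∃ l ∈ L, l x = g x) → g ∈ L

theorem mul_app (g h : X ≃ᵢ X) (x : X) : (g * h) x = g (h x) := rfl

theorem inv_app_self (g : X ≃ᵢ X) (x : X) : g⁻¹ (g x) = x := g.symm_apply_apply x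

theorem app_inv_self (g : X ≃ᵢ X) (x : X) : g (g⁻¹ x) = x := g.apply_symm_apply x

theorem dist_inv_left (g : X ≃ᵢ X) (x y : X) : dist (g⁻¹ x) y = dist x (g y) := by
  rw [← g.dist_eq, app_inv_self]

/-- `g` normalizes `L`. -/
def Normalizes (g : X ≃ᵢ X) (L : Subgroup (X ≃ᵢ X)) : Prop :=
  ∀ l, l ∈ L ↔ g * l * g⁻¹ ∈ L

theorem Normalizes.inv {g : X ≃ᵢ X} {L : Subgroup (X ≃ᵢ X)} (h : Normalizes g L) :
    Normalizes g⁻¹ L := fun l => by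
  rw [h (g⁻¹ * l * g⁻¹⁻¹)]
  simp [mul_assoc]

theorem normalizes_of_mem {g : X ≃ᵢ X} {L : Subgroup (X ≃ᵢ X)} (h : g ∈ L) : Normalizes g L :=
  fun l => by rw [L.mul_mem_cancel_right (L.inv_mem h), L.mul_mem_cancel_left h]

theorem Normalizes.mul {g k : X ≃ᵢ X} {L : Subgroup (X ≃ᵢ X)} (h : Normalizes g L)
    (h' : Normalizes k L) : Normalizes (g * k) L := fun l => by
  rw [h' l, h]
  simp [mul_assoc]

/-- The ball `ball x r` has finitely many translates under `L`. -/
def FinOrb (L : Subgroup (X ≃ᵢ X)) (x : X) (r : ℝ) : Prop :=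
  {B : Set X | ∃ l ∈ L, B = ball (l x) r}.Finite

theorem FinOrb.translate {L : Subgroup (X ≃ᵢ X)} {g : X ≃ᵢ X} (hg : Normalizes g L) {x : X}
    {r : ℝ} (h : FinOrb L x r) : FinOrb L (g x) r := by
  refine (h.image fun B => g '' B).subset ?_
  rintro B ⟨l, hl, rfl⟩
  refine ⟨ball ((g⁻¹ * l * g) x) r, ⟨_, ?_, rfl⟩, ?_⟩
  · have := (hg.inv l).1 hl
    rwa [inv_inv] at this
  · show g '' ball _ r = _
    rw [g.image_ball]
    simp only [mul_app, app_inv_self]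

/-- The set of distances by which members of `L` move `x`. -/
def dset (L : Subgroup (X ≃ᵢ X)) (x : X) : Set ℝ := {ρ | ∃ l ∈ L, ρ = dist (l x) x}

theorem dset_nonempty (L : Subgroup (X ≃ᵢ X)) (x : X) : (dset L x).Nonempty :=
  ⟨_, 1, L.one_mem, rfl⟩

theorem dset_translate {L : Subgroup (X ≃ᵢ X)} {g : X ≃ᵢ X} (hg : Normalizes g L) (x : X) :
    dset L (g x) = dset L x := by
  have key : ∀ g : X ≃ᵢ X, Normalizes g L → ∀ x, dset L (g x) ⊆ dset L x := by
    rintro g hg x _ ⟨l, hl, rfl⟩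
    refine ⟨g⁻¹ * l * g, ?_, ?_⟩
    · have := (hg.inv l).1 hl
      rwa [inv_inv] at this
    · rw [mul_app, mul_app, dist_inv_left]
  refine Subset.antisymm (key g hg x) ?_
  have := key g⁻¹ hg.inv (g x)
  rwa [inv_app_self] at this

open Classical in
/-- The map exchanging the balls of radius `d(x, lx)` around `x` and `lx` by means of `l`, and
fixing all other points. -/
noncomputable def swapFun (l : X ≃ᵢ X) (x : X) (z : X) : X :=
  if dist x z < dist x (l x) then l z
  else if dist (l x) z < dist x (l x) then l⁻¹ z else z

theorem swapFun_near {l : X ≃ᵢ X} {x z : X} (h : dist x z < dist x (l x)) :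
    swapFun l x z = l z := by simp [swapFun, h]

theorem swapFun_far {l : X ≃ᵢ X} {x z : X} (h : dist x (l x) ≤ dist x z)
    (h' : dist x (l x) ≤ dist (l x) z) : swapFun l x z = z := by
  simp [swapFun, h.not_gt, h'.not_gt]

section Ultra
variable [IsUltrametricDist X]

theorem dist_eq_of_lt {x y z : X} (h : dist x y < dist y z) : dist x z = dist y z := by
  have h1 := dist_triangle_max x y z
  have h2 := dist_triangle_max y x z
  rw [dist_comm y x] at h2
  rcases le_max_iff.1 h2 with h3 | h3
  · linarith
  · exact le_antisymm (h1.trans (max_le h.le le_rfl)) h3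

theorem dist_lt_trans {x y z : X} {r : ℝ} (h : dist x y < r) (h' : dist y z < r) :
    dist x z < r := (dist_triangle_max x y z).trans_lt (max_lt h h')

theorem dist_le_trans {x y z : X} {r : ℝ} (h : dist x y ≤ r) (h' : dist y z ≤ r) :
    dist x z ≤ r := (dist_triangle_max x y z).trans (max_le h h')

theorem not_near_of_near' {l : X ≃ᵢ X} {x z : X} (h : dist (l x) z < dist x (l x)) :
    ¬ dist x z < dist x (l x) := fun h' =>
  lt_irrefl _ (dist_lt_trans h' (by rwa [dist_comm]))

theorem swapFun_near' {l : X ≃ᵢ X} {x z : X} (h : dist (l x) z < dist x (l x)) :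
    swapFun l x z = l⁻¹ z := by simp [swapFun, h, not_near_of_near' h]

theorem swapFun_invol (l : X ≃ᵢ X) (x z : X) : swapFun l x (swapFun l x z) = z := by
  by_cases h : dist x z < dist x (l x)
  · rw [swapFun_near h, swapFun_near' (by rwa [l.dist_eq]), inv_app_self]
  by_cases h' : dist (l x) z < dist x (l x)
  · rw [swapFun_near' h', swapFun_near, app_inv_self]
    rwa [dist_comm, dist_inv_left, dist_comm]
  · rw [swapFun_far (not_lt.1 h) (not_lt.1 h'), swapFun_far (not_lt.1 h) (not_lt.1 h')]

theorem swapFun_dist_le (l : X ≃ᵢ X) (x z w : X) :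
    dist (swapFun l x z) (swapFun l x w) ≤ dist z w := by
  have far : ∀ z w : X, dist x z < dist x (l x) → dist x (l x) ≤ dist x w →
      dist (l z) w ≤ dist z w := fun z w h h' => by
    have h1 : dist x (l x) ≤ dist z w := by
      by_contra hc
      exact absurd (dist_lt_trans h (not_le.1 hc)) h'.not_gt
    have h2 : dist (l z) x ≤ dist x (l x) :=
      dist_le_trans (y := l x) (by rw [l.dist_eq, dist_comm]; exact h.le) (dist_comm _ _).le
    exact dist_le_trans (y := x) (h2.trans h1) (dist_le_trans (y := z) (h.le.trans h1) le_rfl)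
  have far' : ∀ z w : X, dist (l x) z < dist x (l x) → dist x (l x) ≤ dist (l x) w →
      dist (l⁻¹ z) w ≤ dist z w := fun z w h h' => by
    have h1 : dist x (l x) ≤ dist z w := by
      by_contra hc
      exact absurd (dist_lt_trans h (not_le.1 hc)) h'.not_gt
    have h2 : dist (l⁻¹ z) (l x) ≤ dist x (l x) :=
      dist_le_trans (y := x) (by rw [dist_inv_left, dist_comm]; exact h.le) le_rfl
    exact dist_le_trans (y := l x) (h2.trans h1) (dist_le_trans (y := z) (h.le.trans h1) le_rfl)
  have cross : ∀ z w : X, dist x z < dist x (l x) → dist (l x) w < dist x (l x) →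
      dist (l z) (l⁻¹ w) ≤ dist z w := fun z w h h' => by
    have h1 : dist x (l x) ≤ dist z w := by
      by_contra hc
      exact lt_irrefl _ (dist_lt_trans (dist_lt_trans h (not_le.1 hc)) (by rwa [dist_comm]))
    have h2 : dist (l z) x ≤ dist x (l x) :=
      dist_le_trans (y := l x) (by rw [l.dist_eq, dist_comm]; exact h.le) (dist_comm _ _).le
    have h3 : dist x (l⁻¹ w) ≤ dist x (l x) := by
      rw [dist_comm, dist_inv_left, dist_comm]; exact h'.le
    exact (dist_le_trans h2 h3).trans h1
  by_cases hz : dist x z < dist x (l x)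
  · by_cases hw : dist x w < dist x (l x)
    · rw [swapFun_near hz, swapFun_near hw, l.dist_eq]
    by_cases hw' : dist (l x) w < dist x (l x)
    · rw [swapFun_near hz, swapFun_near' hw']; exact cross z w hz hw'
    · rw [swapFun_near hz, swapFun_far (not_lt.1 hw) (not_lt.1 hw')]
      exact far z w hz (not_lt.1 hw)
  by_cases hz' : dist (l x) z < dist x (l x)
  · by_cases hw : dist x w < dist x (l x)
    · rw [swapFun_near' hz', swapFun_near hw, dist_comm, dist_comm z]; exact cross w z hw hz'
    by_cases hw' : dist (l x) w < dist x (l x)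
    · rw [swapFun_near' hz', swapFun_near' hw', (l⁻¹).dist_eq]
    · rw [swapFun_near' hz', swapFun_far (not_lt.1 hw) (not_lt.1 hw')]
      exact far' z w hz' (not_lt.1 hw')
  rw [swapFun_far (not_lt.1 hz) (not_lt.1 hz')]
  by_cases hw : dist x w < dist x (l x)
  · rw [swapFun_near hw, dist_comm, dist_comm z]; exact far w z hw (not_lt.1 hz)
  by_cases hw' : dist (l x) w < dist x (l x)
  · rw [swapFun_near' hw', dist_comm, dist_comm z]; exact far' w z hw' (not_lt.1 hz')
  · rw [swapFun_far (not_lt.1 hw) (not_lt.1 hw')]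

/-- `swapFun` as an isometry of `X`. -/
noncomputable def swapIso (l : X ≃ᵢ X) (x : X) : X ≃ᵢ X where
  toFun := swapFun l x
  invFun := swapFun l x
  left_inv := swapFun_invol l x
  right_inv := swapFun_invol l x
  isometry_toFun := Isometry.of_dist_eq fun z w =>
    le_antisymm (swapFun_dist_le l x z w) (by
      simpa only [swapFun_invol] using swapFun_dist_le l x (swapFun l x z) (swapFun l x w))

theorem swapIso_apply (l : X ≃ᵢ X) (x z : X) : swapIso l x z = swapFun l x z := rfl

theorem swapIso_mem {L : Subgroup (X ≃ᵢ X)} (hL : Glued L) {l : X ≃ᵢ X} (hl : l ∈ L) (x : X) :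
    swapIso l x ∈ L := by
  refine hL _ fun z => ?_
  rw [swapIso_apply]
  unfold swapFun
  split_ifs
  exacts [⟨l, hl, rfl⟩, ⟨l⁻¹, L.inv_mem hl, rfl⟩, ⟨1, L.one_mem, rfl⟩]

theorem swapIso_self {l : X ≃ᵢ X} {x : X} : swapIso l x x = l x := by
  rcases (dist_nonneg (x := x) (y := l x)).eq_or_lt with h | h
  · rw [swapIso_apply, swapFun_far (by simp [← h]) (by simp [← h])]
    exact dist_eq_zero.1 h.symm
  · exact swapFun_near (by simpa using h)

/-- Homogeneity: a finite partial isometry moving points only within their `L`-orbits extends to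
a member of the glued group `L`. Points are added one at a time, correcting by a swap. -/
theorem homog {L : Subgroup (X ≃ᵢ X)} (hL : Glued L) (A : Finset X) (φ : X → X)
    (hφ : ∀ x ∈ A, ∀ y ∈ A, dist (φ x) (φ y) = dist x y) (hO : ∀ x ∈ A, ∃ l ∈ L, l x = φ x) :
    ∃ g ∈ L, ∀ x ∈ A, g x = φ x := by
  classical
  induction A using Finset.induction_on with
  | empty => exact ⟨1, L.one_mem, by simp⟩
  | insert a A ha ih =>
    obtain ⟨g, hg, hgA⟩ := ih (fun x hx y hy => hφ x (by simp [hx]) y (by simp [hy]))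
      (fun x hx => hO x (by simp [hx]))
    obtain ⟨l, hl, hla⟩ := hO a (by simp)
    -- `m` carries `g a` to `φ a`; the swap it induces fixes every `g x`, `x ∈ A`
    set m := l * g⁻¹ with hm
    have hma : m (g a) = φ a := by rw [hm, mul_app, inv_app_self, hla]
    have hmL : m ∈ L := L.mul_mem hl (L.inv_mem hg)
    refine ⟨swapIso m (g a) * g, L.mul_mem (swapIso_mem hL hmL _) hg, fun x hx => ?_⟩
    rw [mul_app]
    rcases Finset.mem_insert.1 hx with rfl | hx
    · rw [swapIso_self, hma]
    · have e1 : dist (g a) (g x) = dist a x := g.dist_eq _ _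
      have e2 : dist (φ a) (g x) = dist a x := by
        rw [hgA x hx]; exact hφ a (by simp) x (by simp [hx])
      have e3 : dist (g a) (φ a) ≤ dist a x :=
        dist_le_trans (y := g x) e1.le (by rw [dist_comm]; exact e2.le)
      rw [swapIso_apply, swapFun_far, hgA x hx]
      · rw [hma, e1]; exact e3
      · rw [hma, e2]; exact e3

/-! ### Extending finite partial isometries to finite permutations -/

/-- `V'` is a finite extension of `V` by points from the `H`-orbits of `V`, of the same diameter,
on which all the partial isometries induced on `V` by members of `H` are simultaneously realized
by members of `H` permuting `V'`. -/
structure IsEppaExt (H : Subgroup (X ≃ᵢ X)) (V V' : Finset X) : Prop where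
  sub : V ⊆ V'
  orbit : ∀ z ∈ V', ∃ h ∈ H, h⁻¹ z ∈ V
  diam : ∀ z ∈ V', ∀ w ∈ V', ∃ x ∈ V, ∃ y ∈ V, dist z w ≤ dist x y
  ext : ∀ k ∈ H, ∃ g ∈ H, (∀ x ∈ V, k x ∈ V → g x = k x) ∧ ∀ x ∈ V', g x ∈ V'

open Classical in
/-- Splitting step: `V` falls into pieces `V ∩ c v` at mutual distance `r = diam V`, each piece
having an extension which stays inside `c v`, and no partial isometry moves a point of `V` to
another piece. Then the union of the extensions of the pieces is an extension of `V`. -/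
theorem eppa_split {H : Subgroup (X ≃ᵢ X)} (hH : Glued H) (V : Finset X) (r : ℝ)
    (hr : ∀ x ∈ V, ∀ y ∈ V, dist x y ≤ r) (hr' : ∃ x ∈ V, ∃ y ∈ V, dist x y = r)
    (c : X → Set X) (hc : ∀ v, v ∈ c v) (hc' : ∀ v w, w ∈ c v → c w = c v)
    (hcr : ∀ v w, w ∉ c v → r ≤ dist v w)
    (hpres : ∀ k ∈ H, ∀ v ∈ V, k v ∈ V → k v ∈ c v)
    (hsub : ∀ v ∈ V, ∃ V', IsEppaExt H (V.filter (· ∈ c v)) V' ∧ ∀ z ∈ V', z ∈ c v) :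
    ∃ V', IsEppaExt H V V' := by
  have hsub' : ∀ C : Set X, ∃ V' : Finset X, ∀ v ∈ V, c v = C →
      IsEppaExt H (V.filter (· ∈ C)) V' ∧ ∀ z ∈ V', z ∈ C := by
    intro C
    by_cases hC : ∃ v ∈ V, c v = C
    · obtain ⟨v, hv, rfl⟩ := hC
      obtain ⟨V', h1, h2⟩ := hsub v hv
      exact ⟨V', fun _ _ _ => ⟨h1, h2⟩⟩
    · exact ⟨∅, fun v hv h => absurd ⟨v, hv, h⟩ hC⟩
  choose E hE using hsub'
  have hE1 : ∀ v ∈ V, IsEppaExt H (V.filter (· ∈ c v)) (E (c v)) := fun v hv => (hE _ v hv rfl).1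
  have hE2 : ∀ v ∈ V, ∀ z ∈ E (c v), c z = c v := fun v hv z hz =>
    hc' _ _ ((hE _ v hv rfl).2 z hz)
  -- every point of an extension of a piece is within `r` of each point of `V`
  have hR : ∀ v ∈ V, ∀ z ∈ E (c v), dist v z ≤ r := by
    intro v hv z hz
    obtain ⟨x, hx, y, hy, hxy⟩ := (hE1 v hv).diam v ((hE1 v hv).sub (by simp [hv, hc])) z hz
    exact hxy.trans (hr x (Finset.mem_filter.1 hx).1 y (Finset.mem_filter.1 hy).1)
  have hR2 : ∀ v ∈ V, ∀ z ∈ E (c v), ∀ v' ∈ V, ∀ z' ∈ E (c v'), dist z z' ≤ r := by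
    intro v hv z hz v' hv' z' hz'
    exact dist_le_trans (y := v) (by rw [dist_comm]; exact hR v hv z hz)
      (dist_le_trans (y := v') (hr v hv v' hv') (hR v' hv' z' hz'))
  have hne : ∀ v ∈ V, ∀ z ∈ E (c v), ∀ v' ∈ V, ∀ z' ∈ E (c v'), c v ≠ c v' → dist z z' = r := by
    intro v hv z hz v' hv' z' hz' hvv
    refine le_antisymm (hR2 v hv z hz v' hv' z' hz') (hcr z z' fun h => hvv ?_)
    rw [← hE2 v hv z hz, ← hE2 v' hv' z' hz', hc' _ _ h]
  refine ⟨V.biUnion fun v => E (c v), ?_, ?_, ?_, ?_⟩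
  · intro v hv
    exact Finset.mem_biUnion.2 ⟨v, hv, (hE1 v hv).sub (by simp [hv, hc])⟩
  · intro z hz
    obtain ⟨v, hv, hz⟩ := Finset.mem_biUnion.1 hz
    obtain ⟨h, hh, hz'⟩ := (hE1 v hv).orbit z hz
    exact ⟨h, hh, (Finset.mem_filter.1 hz').1⟩
  · intro z hz w hw
    obtain ⟨v, hv, hz⟩ := Finset.mem_biUnion.1 hz
    obtain ⟨v', hv', hw⟩ := Finset.mem_biUnion.1 hw
    obtain ⟨x, hx, y, hy, hxy⟩ := hr'
    exact ⟨x, hx, y, hy, hxy ▸ hR2 v hv z hz v' hv' w hw⟩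
  · intro k hk
    have : ∀ C : Set X, ∃ g ∈ H, ∀ v ∈ V, c v = C →
        (∀ x ∈ V.filter (· ∈ C), k x ∈ V.filter (· ∈ C) → g x = k x) ∧
          ∀ x ∈ E C, g x ∈ E C := by
      intro C
      by_cases hC : ∃ v ∈ V, c v = C
      · obtain ⟨v, hv, rfl⟩ := hC
        obtain ⟨g, hg, h⟩ := (hE1 v hv).ext k hk
        exact ⟨g, hg, fun _ _ _ => h⟩
      · exact ⟨1, H.one_mem, fun v hv h => absurd ⟨v, hv, h⟩ hC⟩
    choose G hG hG' using this
    have hmap : ∀ v ∈ V, ∀ z ∈ E (c v), G (c z) z ∈ E (c v) := fun v hv z hz => by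
      rw [hE2 v hv z hz]; exact (hG' _ v hv rfl).2 z hz
    obtain ⟨g, hg, hgV⟩ := homog hH (V.biUnion fun v => E (c v)) (fun z => G (c z) z) (by
      intro z hz w hw
      obtain ⟨v, hv, hz⟩ := Finset.mem_biUnion.1 hz
      obtain ⟨v', hv', hw⟩ := Finset.mem_biUnion.1 hw
      by_cases hvv : c v = c v'
      · simp only [hE2 v hv z hz, hE2 v' hv' w hw, hvv, IsometryEquiv.dist_eq]
      · rw [hne v hv z hz v' hv' w hw hvv]
        exact hne v hv _ (hmap v hv z hz) v' hv' _ (hmap v' hv' w hw) hvv)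
      (fun z _ => ⟨_, hG _, rfl⟩)
    refine ⟨g, hg, fun x hx hkx => ?_, fun x hx => ?_⟩
    · rw [hgV x (Finset.mem_biUnion.2 ⟨x, hx, (hE1 x hx).sub (by simp [hx, hc])⟩)]
      exact (hG' _ x hx rfl).1 x (by simp [hx, hc]) (by simp [hkx, hpres k hk x hx hkx])
    · rw [hgV x hx]
      obtain ⟨v, hv, hz⟩ := Finset.mem_biUnion.1 hx
      exact Finset.mem_biUnion.2 ⟨v, hv, hmap v hv x hz⟩

open Classical in
/-- Collapsing step: all balls of radius `r = diam V` around points of `V` are `H`-equivalent, by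
maps `t D` from a fixed one `ball a r` to `D`. An extension of the set `V₀` of pull-backs of the
points of `V` along the maps `t D` spreads out to an extension of `V`. -/
theorem eppa_collapse {H : Subgroup (X ≃ᵢ X)} (hH : Glued H) (V V₀ V₀' : Finset X) (r : ℝ)
    (hr : ∀ x ∈ V, ∀ y ∈ V, dist x y ≤ r) (hr' : ∃ x ∈ V, ∃ y ∈ V, dist x y = r)
    (a : X) (t : Set X → X ≃ᵢ X) (ht : ∀ D, t D ∈ H)
    (hta : ∀ v ∈ V, dist (t (ball v r) a) v < r)
    (hV₀ : V₀ = V.image fun v => (t (ball v r))⁻¹ v) (hE : IsEppaExt H V₀ V₀') :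
    ∃ V', IsEppaExt H V V' := by
  have hball : ∀ {v w : X}, dist v w < r → ball v r = ball w r := fun {v w} h =>
    IsUltrametricDist.ball_eq_of_mem (by rwa [mem_ball, dist_comm])
  have hV₀a : ∀ z ∈ V₀, dist z a < r := by
    intro z hz
    rw [hV₀] at hz
    obtain ⟨v, hv, rfl⟩ := Finset.mem_image.1 hz
    rw [dist_inv_left, dist_comm]
    exact hta v hv
  have hV₀'a : ∀ z ∈ V₀', dist z a < r := by
    intro z hz
    obtain ⟨x, hx, y, hy, h⟩ := hE.diam z hz z hz
    obtain ⟨x', hx', y', hy', h'⟩ := hE.diam z hz x (hE.sub hx)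
    refine dist_lt_trans (h'.trans_lt (dist_lt_trans (hV₀a x' hx') ?_)) (hV₀a x hx)
    rw [dist_comm]; exact hV₀a y' hy'
  have htz : ∀ v ∈ V, ∀ z ∈ V₀', dist (t (ball v r) z) v < r := fun v hv z hz =>
    dist_lt_trans (by rw [IsometryEquiv.dist_eq]; exact hV₀'a z hz) (hta v hv)
  let S : Finset (Set X) := V.image fun v => ball v r
  have hS : ∀ D ∈ S, ∀ z ∈ V₀', ball (t D z) r = D := by
    intro D hD z hz
    obtain ⟨v, hv, rfl⟩ := Finset.mem_image.1 hD
    exact hball (htz v hv z hz)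
  have hSR : ∀ D ∈ S, ∀ z ∈ V₀', ∀ D' ∈ S, ∀ z' ∈ V₀', dist (t D z) (t D' z') ≤ r := by
    intro D hD z hz D' hD' z' hz'
    obtain ⟨v, hv, rfl⟩ := Finset.mem_image.1 hD
    obtain ⟨v', hv', rfl⟩ := Finset.mem_image.1 hD'
    exact dist_le_trans (htz v hv z hz).le (dist_le_trans (hr v hv v' hv')
      (by rw [dist_comm]; exact (htz v' hv' z' hz').le))
  have hSne : ∀ D ∈ S, ∀ z ∈ V₀', ∀ D' ∈ S, ∀ z' ∈ V₀', D ≠ D' →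
      dist (t D z) (t D' z') = r := by
    intro D hD z hz D' hD' z' hz' hne
    refine le_antisymm (hSR D hD z hz D' hD' z' hz') (not_lt.1 fun h => hne ?_)
    rw [← hS D hD z hz, ← hS D' hD' z' hz', hball h]
  have hVS : ∀ v ∈ V, ball v r ∈ S := fun v hv => Finset.mem_image_of_mem _ hv
  have hVpull : ∀ v ∈ V, (t (ball v r))⁻¹ v ∈ V₀ := fun v hv => by
    rw [hV₀]; exact Finset.mem_image_of_mem (fun v => (t (ball v r))⁻¹ v) hv
  have hmem : ∀ w, w ∈ S.biUnion (fun D => V₀'.image (t D)) ↔ ∃ D ∈ S, ∃ z ∈ V₀', t D z = w := by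
    simp
  refine ⟨S.biUnion fun D => V₀'.image (t D), ?_, ?_, ?_, ?_⟩
  · intro v hv
    exact (hmem v).2 ⟨ball v r, hVS v hv, _, hE.sub (hVpull v hv), app_inv_self _ _⟩
  · intro w hw
    obtain ⟨D, hD, z, hz, rfl⟩ := (hmem w).1 hw
    obtain ⟨h, hh, hz'⟩ := hE.orbit z hz
    rw [hV₀] at hz'
    obtain ⟨v, hv, hvz⟩ := Finset.mem_image.1 hz'
    refine ⟨t D * h * (t (ball v r))⁻¹, H.mul_mem (H.mul_mem (ht _) hh) (H.inv_mem (ht _)), ?_⟩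
    have : (t D * h * (t (ball v r))⁻¹)⁻¹ (t D z) = v := by
      simp only [mul_inv_rev, inv_inv, mul_app, inv_app_self]
      rw [← hvz, app_inv_self]
    rwa [this]
  · intro w hw w' hw'
    obtain ⟨D, hD, z, hz, rfl⟩ := (hmem w).1 hw
    obtain ⟨D', hD', z', hz', rfl⟩ := (hmem w').1 hw'
    obtain ⟨x, hx, y, hy, hxy⟩ := hr'
    exact ⟨x, hx, y, hy, hxy ▸ hSR D hD z hz D' hD' z' hz'⟩
  · intro k hk
    -- `k` induces a partial injection of the balls in `S`, which extends to a permutation `σ`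
    let S₀ : Finset S := Finset.univ.filter fun D => ∃ v ∈ V, ball v r = D ∧ k v ∈ V
    have himg : ∀ v : X, k '' ball v r = ball (k v) r := fun v => k.image_ball v r
    obtain ⟨σ, hσ⟩ := Finset.exists_equiv_extend_of_card_eq (t := S) (s := S₀)
      (f := fun D : S => k '' (D : Set X)) (by simp) (by
        intro C hC
        obtain ⟨D, hD, rfl⟩ := Finset.mem_image.1 hC
        obtain ⟨v, hv, hvD, hkv⟩ := (Finset.mem_filter.1 hD).2
        simp only [← hvD, himg]
        exact hVS _ hkv)
      (fun D _ D' _ h => Subtype.ext (k.injective.image_injective h))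
    have hσV : ∀ v (hv : v ∈ V), k v ∈ V → (σ ⟨ball v r, hVS v hv⟩ : Set X) = ball (k v) r := by
      intro v hv hkv
      rw [hσ _ (Finset.mem_filter.2 ⟨Finset.mem_univ _, v, hv, rfl, hkv⟩), himg]
    let τ : Set X → Set X := fun D => if h : D ∈ S then σ ⟨D, h⟩ else D
    have hτS : ∀ D ∈ S, τ D ∈ S := fun D hD => by
      simp only [τ, hD, dif_pos]; exact Subtype.coe_prop _
    have hτinj : ∀ D ∈ S, ∀ D' ∈ S, τ D = τ D' → D = D' := by
      intro D hD D' hD' h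
      simp only [τ, hD, hD', dif_pos] at h
      simpa using σ.injective (Subtype.ext h)
    have hτV : ∀ v ∈ V, k v ∈ V → τ (ball v r) = ball (k v) r := fun v hv hkv => by
      simp only [τ, hVS v hv, dif_pos]; exact hσV v hv hkv
    choose G hG hG1 hG2 using fun D : Set X => hE.ext ((t (τ D))⁻¹ * k * t D)
      (H.mul_mem (H.mul_mem (H.inv_mem (ht _)) hk) (ht _))
    let φ : X → X := fun w => t (τ (ball w r)) (G (ball w r) ((t (ball w r))⁻¹ w))
    have hφ : ∀ D ∈ S, ∀ z ∈ V₀', φ (t D z) = t (τ D) (G D z) := by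
      intro D hD z hz
      simp only [φ, hS D hD z hz, inv_app_self]
    obtain ⟨g, hg, hgV⟩ := homog hH (S.biUnion fun D => V₀'.image (t D)) φ (by
      intro w hw w' hw'
      obtain ⟨D, hD, z, hz, rfl⟩ := (hmem w).1 hw
      obtain ⟨D', hD', z', hz', rfl⟩ := (hmem w').1 hw'
      rw [hφ D hD z hz, hφ D' hD' z' hz']
      by_cases hDD : D = D'
      · subst hDD; simp only [IsometryEquiv.dist_eq]
      · rw [hSne D hD z hz D' hD' z' hz' hDD]
        exact hSne _ (hτS D hD) _ (hG2 D z hz) _ (hτS D' hD') _ (hG2 D' z' hz')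
          fun h => hDD (hτinj D hD D' hD' h))
      (fun w _ => ⟨t (τ (ball w r)) * G (ball w r) * (t (ball w r))⁻¹,
        H.mul_mem (H.mul_mem (ht _) (hG _)) (H.inv_mem (ht _)), rfl⟩)
    refine ⟨g, hg, fun v hv hkv => ?_, fun w hw => ?_⟩
    · rw [hgV v ((hmem v).2 ⟨ball v r, hVS v hv, _, hE.sub (hVpull v hv), app_inv_self _ _⟩)]
      have h1 : ((t (τ (ball v r)))⁻¹ * k * t (ball v r)) ((t (ball v r))⁻¹ v)
          = (t (ball (k v) r))⁻¹ (k v) := by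
        simp only [mul_app, app_inv_self, hτV v hv hkv]
      have h2 := hG1 (ball v r) _ (hVpull v hv) (by rw [h1]; exact hVpull _ hkv)
      simp only [φ]
      rw [h2, h1, hτV v hv hkv, app_inv_self]
    · rw [hgV w hw]
      obtain ⟨D, hD, z, hz, rfl⟩ := (hmem w).1 hw
      rw [hφ D hD z hz]
      exact (hmem _).2 ⟨τ D, hτS D hD, G D z, hG2 D z hz, rfl⟩

open Classical in
/-- The extension property: every finite `V` has a finite extension `V'` on which all partial
isometries of `V` coming from `H` become permutations coming from `H`. The induction is on the
size of `V`: a set whose points at maximal distance are never `H`-equivalent splits into pieces;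
otherwise a pair `a`, `k a` at maximal distance makes the collapsed set smaller than `V`. -/
theorem eppa {H : Subgroup (X ≃ᵢ X)} (hH : Glued H) (V : Finset X) : ∃ V', IsEppaExt H V V' := by
  induction hn : V.card using Nat.strong_induction_on generalizing V with
  | _ n ih =>
  subst hn
  rcases V.eq_empty_or_nonempty with rfl | hne
  · exact ⟨∅, by simp, by simp, by simp, fun k hk => ⟨1, H.one_mem, by simp, by simp⟩⟩
  obtain ⟨p, hp, hpmax⟩ := Finset.exists_max_image (V ×ˢ V) (fun p => dist p.1 p.2)
    (hne.product hne)
  obtain ⟨hp1, hp2⟩ := Finset.mem_product.1 hp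
  set r := dist p.1 p.2 with hrdef
  have hr : ∀ x ∈ V, ∀ y ∈ V, dist x y ≤ r := fun x hx y hy =>
    hpmax (x, y) (Finset.mem_product.2 ⟨hx, hy⟩)
  have hr' : ∃ x ∈ V, ∃ y ∈ V, dist x y = r := ⟨_, hp1, _, hp2, rfl⟩
  rcases (dist_nonneg (x := p.1) (y := p.2)).eq_or_lt with h0 | hr0
  · have hz : ∀ x ∈ V, ∀ y ∈ V, x = y := fun x hx y hy =>
      dist_le_zero.1 ((hr x hx y hy).trans_eq h0.symm)
    exact ⟨V, Finset.Subset.refl _, fun z hz => ⟨1, H.one_mem, by simpa using hz⟩,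
      fun z hz w hw => ⟨z, hz, w, hw, le_rfl⟩,
      fun k hk => ⟨1, H.one_mem, fun x hx hkx => hz _ hx _ hkx, fun x hx => hx⟩⟩
  rw [← hrdef] at hr0
  -- a piece of `V` missing a point of `V` has an extension by induction
  have hsmall : ∀ C : Set X, (∃ w ∈ V, w ∉ C) → ∃ V', IsEppaExt H (V.filter (· ∈ C)) V' := by
    rintro C ⟨w, hw, hwC⟩
    exact ih _ (Finset.card_lt_card (Finset.filter_ssubset.2 ⟨w, hw, hwC⟩)) _ rfl
  by_cases hA : ∃ y ∈ V, ∃ z ∈ V, ∀ h ∈ H, ¬ dist (h y) z < r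
  · let c : X → Set X := fun v => {z | ∃ h ∈ H, dist (h v) z < r}
    have hc' : ∀ v w, w ∈ c v → c w = c v := by
      rintro v w ⟨h, hh, hw⟩
      ext z
      constructor
      · rintro ⟨h', hh', hz⟩
        exact ⟨h' * h, H.mul_mem hh' hh, dist_lt_trans (y := h' w)
          (by rw [mul_app, h'.dist_eq]; exact hw) hz⟩
      · rintro ⟨h', hh', hz⟩
        refine ⟨h' * h⁻¹, H.mul_mem hh' (H.inv_mem hh), dist_lt_trans (y := h' v) ?_ hz⟩
        rw [mul_app, h'.dist_eq, dist_inv_left, dist_comm]; exact hw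
    refine eppa_split hH V r hr hr' c (fun v => ⟨1, H.one_mem, by simpa using hr0⟩) hc' ?_ ?_ ?_
    · intro v w hw
      exact not_lt.1 fun h => hw ⟨1, H.one_mem, h⟩
    · intro k hk v _ _
      exact ⟨k, hk, by simpa using hr0⟩
    · intro v hv
      obtain ⟨y, hy, z, hz, hyz⟩ := hA
      obtain ⟨V', hV'⟩ := hsmall (c v) (by
        by_cases hyv : y ∈ c v
        · refine ⟨z, hz, fun hzv => ?_⟩
          rw [← hc' _ _ hyv] at hzv
          obtain ⟨h, hh, hd⟩ := hzv
          exact hyz h hh hd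
        · exact ⟨y, hy, hyv⟩)
      refine ⟨V', hV', fun z hz => ?_⟩
      obtain ⟨h, hh, hz'⟩ := hV'.orbit z hz
      have := (Finset.mem_filter.1 hz').2
      rw [← hc' _ _ this]
      exact ⟨h, hh, by simpa [app_inv_self] using hr0⟩
  push Not at hA
  by_cases hB : ∃ a ∈ V, ∃ k ∈ H, k a ∈ V ∧ dist a (k a) = r
  · obtain ⟨a, ha, k, hk, hka, hak⟩ := hB
    have : ∀ D : Set X, ∃ s ∈ H, ∀ v ∈ V, ball v r = D → dist (s a) v < r := by
      intro D
      by_cases hD : ∃ v ∈ V, ball v r = D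
      · obtain ⟨v, hv, rfl⟩ := hD
        obtain ⟨h, hh, hd⟩ := hA a ha v hv
        refine ⟨h, hh, fun w _ hw => dist_lt_trans hd ?_⟩
        rw [← mem_ball, hw]; exact mem_ball_self hr0
      · exact ⟨1, H.one_mem, fun v hv h => absurd ⟨v, hv, h⟩ hD⟩
    choose s hs hsV using this
    have hne' : ball (k a) r ≠ ball a r := fun h => by
      have : k a ∈ ball a r := h ▸ mem_ball_self hr0
      rw [mem_ball, dist_comm, hak] at this
      exact lt_irrefl _ this
    let t : Set X → X ≃ᵢ X := fun D => if D = ball a r then 1 else if D = ball (k a) r then k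
      else s D
    have ta : t (ball a r) = 1 := by simp [t]
    have tka : t (ball (k a) r) = k := by simp [t, hne']
    have hcard : (V.image fun v => (t (ball v r))⁻¹ v).card < V.card := by
      refine Finset.card_image_le.lt_of_ne fun h => ?_
      have hinj := Finset.card_image_iff.1 h
      have : a = k a := hinj ha hka (by simp only [ta, tka, inv_app_self]; rfl)
      rw [← this, dist_self] at hak
      exact hr0.ne hak
    obtain ⟨V₀', hV₀'⟩ := ih _ hcard _ rfl
    refine eppa_collapse hH V _ V₀' r hr hr' a t (fun D => ?_) (fun v hv => ?_) rfl hV₀'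
    · simp only [t]; split_ifs
      exacts [H.one_mem, hk, hs D]
    · simp only [t]; split_ifs with h1 h2
      · change dist a v < r
        rw [← mem_ball, h1]; exact mem_ball_self hr0
      · rw [← mem_ball, h2]; exact mem_ball_self hr0
      · exact hsV _ v hv rfl
  · push Not at hB
    have hc' : ∀ v w : X, w ∈ ball v r → ball w r = ball v r := fun v w h =>
      (IsUltrametricDist.ball_eq_of_mem h).symm
    refine eppa_split hH V r hr hr' (fun v => ball v r) (fun v => mem_ball_self hr0) hc' ?_ ?_ ?_
    · intro v w hw
      rw [mem_ball, dist_comm] at hw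
      exact not_lt.1 hw
    · intro k hk v hv hkv
      rw [mem_ball, dist_comm]
      exact (hr v hv _ hkv).lt_of_ne (hB v hv k hk hkv)
    · intro v hv
      obtain ⟨V', hV'⟩ := hsmall (ball v r) (by
        by_cases h1 : p.1 ∈ ball v r
        · refine ⟨p.2, hp2, fun h2 => ?_⟩
          rw [← hc' _ _ h1, mem_ball, dist_comm, ← hrdef] at h2
          exact lt_irrefl _ h2
        · exact ⟨p.1, hp1, h1⟩)
      refine ⟨V', hV', fun z hz => ?_⟩
      obtain ⟨x, hx, y, hy, hxy⟩ := hV'.diam z hz v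
        (hV'.sub (Finset.mem_filter.2 ⟨hv, mem_ball_self hr0⟩))
      rw [mem_ball]
      refine hxy.trans_lt (dist_lt_trans (mem_ball.1 (Finset.mem_filter.1 hx).2) ?_)
      rw [dist_comm]; exact mem_ball.1 (Finset.mem_filter.1 hy).2

/-! ### Removing finite orbits -/

/-- Every ball has either infinitely many translates under `L` or only one. -/
def Ext (L : Subgroup (X ≃ᵢ X)) : Prop :=
  ∀ x r, 0 < r → FinOrb L x r → ∀ l ∈ L, dist (l x) x < r

theorem ball_eq_iff {x y : X} {r : ℝ} (hr : 0 < r) : ball x r = ball y r ↔ dist x y < r := by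
  refine ⟨fun h => ?_, fun h => (IsUltrametricDist.ball_eq_of_mem (by rwa [mem_ball])).symm⟩
  rw [← mem_ball, ← h]; exact mem_ball_self hr

theorem FinOrb.mono_rad {L : Subgroup (X ≃ᵢ X)} {x : X} {r r' : ℝ} (hr : 0 < r) (hrr : r ≤ r')
    (h : FinOrb L x r) : FinOrb L x r' := by
  refine (h.image fun B => {z | ∃ b ∈ B, dist b z < r'}).subset ?_
  rintro B ⟨l, hl, rfl⟩
  refine ⟨ball (l x) r, ⟨l, hl, rfl⟩, ?_⟩
  ext z
  constructor
  · rintro ⟨b, hb, hz⟩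
    rw [mem_ball, dist_comm]
    exact dist_lt_trans (by rw [dist_comm]; exact (mem_ball.1 hb).trans_le hrr) hz
  · intro hz
    exact ⟨l x, mem_ball_self hr, by rw [dist_comm]; exact hz⟩

/-- The members of `L` fixing every ball with a finite `L`-orbit. -/
def finPart (L : Subgroup (X ≃ᵢ X)) : Subgroup (X ≃ᵢ X) where
  carrier := {l | l ∈ L ∧ ∀ x r, 0 < r → FinOrb L x r → dist (l x) x < r}
  mul_mem' := by
    rintro a b ⟨ha, ha'⟩ ⟨hb, hb'⟩
    exact ⟨L.mul_mem ha hb, fun x r hr h => dist_lt_trans (y := a x)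
      (by rw [mul_app, a.dist_eq]; exact hb' x r hr h) (ha' x r hr h)⟩
  one_mem' := ⟨L.one_mem, fun x r hr _ => by simpa using hr⟩
  inv_mem' := by
    rintro a ⟨ha, ha'⟩
    exact ⟨L.inv_mem ha, fun x r hr h => by
      rw [dist_inv_left, dist_comm]; exact ha' x r hr h⟩

theorem mem_finPart {L : Subgroup (X ≃ᵢ X)} {l : X ≃ᵢ X} : l ∈ finPart L ↔
    l ∈ L ∧ ∀ x r, 0 < r → FinOrb L x r → dist (l x) x < r := Iff.rfl

theorem finPart_glued {L : Subgroup (X ≃ᵢ X)} (hL : Glued L) : Glued (finPart L) := by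
  intro g hg
  refine ⟨hL g fun x => ?_, fun x r hr h => ?_⟩
  · obtain ⟨l, hl, h⟩ := hg x
    exact ⟨l, hl.1, h⟩
  · obtain ⟨l, hl, h'⟩ := hg x
    rw [← h']; exact hl.2 x r hr h

theorem Normalizes.finPart {L : Subgroup (X ≃ᵢ X)} {g : X ≃ᵢ X} (hg : Normalizes g L) :
    Normalizes g (finPart L) := by
  have key : ∀ g : X ≃ᵢ X, Normalizes g L → ∀ l ∈ UltraGen.finPart L,
      g * l * g⁻¹ ∈ UltraGen.finPart L := by
    intro g hg l hl
    refine ⟨(hg l).1 hl.1, fun x r hr h => ?_⟩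
    have := hl.2 _ r hr (h.translate hg.inv)
    rw [dist_comm, dist_inv_left, dist_comm] at this
    exact this
  refine fun l => ⟨key g hg l, fun h => ?_⟩
  have := key g⁻¹ hg.inv _ h
  simpa [mul_assoc] using this

theorem dist_swap_le (l : X ≃ᵢ X) (x z : X) : dist z (swapIso l x z) ≤ dist x (l x) := by
  rw [swapIso_apply]
  unfold swapFun
  split_ifs with h1 h2
  · exact dist_le_trans (y := x) (by rw [dist_comm]; exact h1.le)
      (dist_le_trans (y := l x) le_rfl (by rw [l.dist_eq]; exact h1.le))
  · exact dist_le_trans (y := l x) (by rw [dist_comm]; exact h2.le) (dist_le_trans (y := x)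
      (dist_comm _ _).le (by rw [dist_comm, dist_inv_left, dist_comm]; exact h2.le))
  · simp

/-- A ball fixed up to finitely many positions by a group containing `τ(1, 𝓑)` is fixed by
`τ(1, 𝓑)`, provided that `X` has the `𝓑`-extremality property. -/
theorem fixed_of_finOrb {𝓑 : Set (Set X)} (hE : ExtremalityProperty X 𝓑)
    {M : Subgroup (X ≃ᵢ X)} (hM : ∀ g ∈ tau 1 𝓑, g ∈ M) {x : X} {r : ℝ} (hr : 0 < r)
    (h : FinOrb M x r) : ∀ g ∈ tau (1 : X ≃ᵢ X) 𝓑, dist (g x) x < r := by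
  intro g hg
  have himg : ∀ g : X ≃ᵢ X, g '' ball x r = ball (g x) r := fun g => g.image_ball x r
  rcases hE (ball x r) ⟨r, hr, x, rfl⟩ with h' | ⟨D, hD⟩
  · refine absurd (h.subset ?_) h'
    rintro B ⟨g, hg, rfl⟩
    exact ⟨g, hM g hg, himg g⟩
  · have h1 : ball (g x) r ∈ orb 𝓑 (ball x r) := ⟨g, hg, himg g⟩
    have h2 : ball x r ∈ orb 𝓑 (ball x r) := ⟨1, fun B _ => rfl, himg 1⟩
    rw [hD, mem_singleton_iff] at h1 h2
    rw [← ball_eq_iff hr, h1, h2]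

/-- If `L` contains `τ(1, 𝓑)`, where `X` has the `𝓑`-extremality property, then under `finPart L`
every ball has one or infinitely many translates. If `k ∈ finPart L` moved a ball around `x` with
finite orbit, then the swaps of `x` and `k x` would have infinitely many `L`-conjugates, and one of
them would lie in `τ(1, 𝓑)` because the finite family `𝓑` can obstruct only finitely many. -/
theorem finPart_ext {𝓑 : Set (Set X)} (h𝓑 : FDFamily 𝓑) (hE : ExtremalityProperty X 𝓑)
    {L : Subgroup (X ≃ᵢ X)} (hM : ∀ g ∈ tau 1 𝓑, g ∈ L) :
    (∀ g ∈ tau 1 𝓑, g ∈ finPart L) ∧ Ext (finPart L) := by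
  have hM' : ∀ g ∈ tau 1 𝓑, g ∈ finPart L := fun g hg =>
    ⟨hM g hg, fun x r hr h => fixed_of_finOrb hE hM hr h g hg⟩
  refine ⟨hM', fun x r₀ hr₀ hfin k hk => ?_⟩
  by_contra hcon
  set r := dist (k x) x with hrdef
  have hrr : r₀ ≤ r := not_lt.1 hcon
  have hr : 0 < r := hr₀.trans_le hrr
  have hinf : ¬ FinOrb L x r := fun h => lt_irrefl _ (hk.2 x r hr h)
  have hfin' : FinOrb (finPart L) x r := hfin.mono_rad hr₀ hrr
  have hnorm : ∀ l ∈ L, Normalizes l (finPart L) := fun l hl => (normalizes_of_mem hl).finPart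
  obtain ⟨l, hl, hlB⟩ : ∃ l ∈ L, ∀ B ∈ 𝓑, ¬ B ⊆ ball (l x) r ∧ ¬ B ⊆ ball (l (k x)) r := by
    by_contra hno
    push Not at hno
    apply hinf
    have hne : ∀ B ∈ 𝓑, ∃ b, b ∈ B := fun B hB => by
      obtain ⟨ρ, hρ, b, rfl⟩ := h𝓑.2.1 B hB
      exact ⟨b, mem_ball_self hρ⟩
    have h1 : ∀ B ∈ 𝓑, {C : Set X | (∃ y, C = ball y r) ∧ B ⊆ C}.Finite := fun B hB => by
      refine Set.Subsingleton.finite ?_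
      rintro C ⟨⟨y, rfl⟩, hC⟩ C' ⟨⟨y', rfl⟩, hC'⟩
      obtain ⟨b, hb⟩ := hne B hB
      rw [IsUltrametricDist.ball_eq_of_mem (hC hb), IsUltrametricDist.ball_eq_of_mem (hC' hb)]
    have h2 : ∀ B ∈ 𝓑, {C : Set X | ∃ l ∈ L, C = ball (l x) r ∧ B ⊆ ball (l (k x)) r}.Finite := by
      intro B hB
      obtain ⟨b, hb⟩ := hne B hB
      by_cases hl₀ : ∃ l₀ ∈ L, B ⊆ ball (l₀ (k x)) r
      · obtain ⟨l₀, hl₀, hB₀⟩ := hl₀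
        refine (hfin'.translate ((hnorm _ hl₀).mul (hnorm _ hk.1))).subset ?_
        rintro C ⟨l, hl, rfl, hlB⟩
        refine ⟨l * k⁻¹ * l⁻¹, (hnorm l hl _).1 (Subgroup.inv_mem _ hk), ?_⟩
        have hd : dist (l (k x)) (l₀ (k x)) < r :=
          dist_lt_trans (by rw [dist_comm]; exact hlB hb) (hB₀ hb)
        rw [ball_eq_iff hr]
        have : l x = (l * k⁻¹ * l⁻¹) (l (k x)) := by
          simp only [mul_app, inv_app_self]
        rw [this, IsometryEquiv.dist_eq]
        exact hd
      · convert Set.finite_empty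
        ext C
        simp only [mem_ofPred_eq, mem_empty_iff_false, iff_false]
        rintro ⟨l, hl, -, h⟩
        exact hl₀ ⟨l, hl, h⟩
    refine (h𝓑.1.biUnion fun B hB => (h1 B hB).union (h2 B hB)).subset ?_
    rintro C ⟨l, hl, rfl⟩
    obtain ⟨B, hB, hlB⟩ := hno l hl
    refine mem_biUnion hB ?_
    by_cases h : B ⊆ ball (l x) r
    · exact Or.inl ⟨⟨_, rfl⟩, h⟩
    · exact Or.inr ⟨l, hl, rfl, hlB h⟩
  set m := l * k * l⁻¹ with hm
  have hmx : m (l x) = l (k x) := by simp only [hm, mul_app, inv_app_self]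
  have hd : dist (l x) (m (l x)) = r := by rw [hmx, l.dist_eq, dist_comm]
  have hmap : ∀ B ∈ 𝓑, ∀ z ∈ B, swapIso m (l x) z ∈ B := by
    intro B hB z hz
    obtain ⟨ρ, hρ, b, rfl⟩ := h𝓑.2.1 B hB
    obtain ⟨n1, n2⟩ := hlB _ hB
    have hbz : ball b ρ = ball z ρ := IsUltrametricDist.ball_eq_of_mem hz
    rw [hbz] at n1 n2 ⊢
    rcases lt_or_ge r ρ with hlt | hge
    · rw [mem_ball, dist_comm]
      exact (dist_swap_le m (l x) z).trans_lt (hd ▸ hlt)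
    · have hfar : ∀ y : X, ¬ ball z ρ ⊆ ball y r → r ≤ dist y z := fun y hy =>
        not_lt.1 fun h => hy (by
          rw [(ball_eq_iff hr).2 h]; exact ball_subset_ball hge)
      rw [swapIso_apply, swapFun_far]
      · exact mem_ball_self hρ
      · rw [hd]; exact hfar _ n1
      · rw [hd, hmx]; exact hfar _ n2
  have hs : swapIso m (l x) ∈ tau (1 : X ≃ᵢ X) 𝓑 := by
    intro B hB
    have : (1 : X ≃ᵢ X) '' B = B := Set.image_id B
    rw [this]
    refine Subset.antisymm (image_subset_iff.2 (hmap B hB)) fun z hz => ?_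
    exact ⟨_, hmap B hB z hz, swapFun_invol m (l x) z⟩
  have := fixed_of_finOrb hE hM' hr₀ (hfin.translate (hnorm l hl)) _ hs
  rw [swapIso_self, dist_comm, hd] at this
  exact hcon this

/-! ### Independent translates -/

theorem move_near {l : X ≃ᵢ X} {x y : X} (h : dist x y < dist (l x) x) :
    dist (l y) y = dist (l x) x := by
  have h1 : dist (l y) x = dist (l x) x :=
    dist_eq_of_lt (by rw [l.dist_eq, dist_comm]; exact h)
  rw [dist_comm (l y), dist_eq_of_lt (y := x), dist_comm, h1]
  rw [dist_comm y, dist_comm x (l y), h1]; exact h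

theorem dset_near {L : Subgroup (X ≃ᵢ X)} {x y : X} {s : ℝ} (hs : s ∈ dset L x)
    (h : dist x y < s) : s ∈ dset L y := by
  obtain ⟨l, hl, rfl⟩ := hs
  exact ⟨l, hl, (move_near h).symm⟩

/-- Finitely many balls with infinite orbits can simultaneously be moved off finitely many points,
by Neumann's covering lemma: `L` is not a finite union of cosets of subgroups of infinite index. -/
theorem neumann (L : Subgroup (X ≃ᵢ X)) (P : Finset (X × X)) (c : X → ℝ)
    (hP : ∀ p ∈ P, 0 < c p.1 ∧ ¬ FinOrb L p.1 (c p.1)) :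
    ∃ h ∈ L, ∀ p ∈ P, c p.1 ≤ dist (h p.1) p.2 := by
  classical
  by_contra hno
  push Not at hno
  let S : X × X → Subgroup L := fun p =>
    if hp : 0 < c p.1 then
      { carrier := {l | dist (l.1 p.1) p.1 < c p.1}
        mul_mem' := fun {a b} ha hb => dist_lt_trans (y := a.1 p.1)
          (by
            show dist (a.1 (b.1 p.1)) (a.1 p.1) < _
            rw [a.1.dist_eq]; exact hb) ha
        one_mem' := by simpa using hp
        inv_mem' := fun {a} ha => by
          show dist (a.1⁻¹ p.1) p.1 < _
          rw [dist_inv_left, dist_comm]; exact ha }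
    else ⊤
  have hS : ∀ p ∈ P, ∀ l : L, l ∈ S p ↔ dist (l.1 p.1) p.1 < c p.1 := by
    intro p hp l
    simp only [S, dif_pos (hP p hp).1]
    rfl
  have hg : ∀ p : X × X, ∃ g : L, (∃ l : L, dist (l.1 p.1) p.2 < c p.1) →
      dist (g.1 p.1) p.2 < c p.1 := fun p => by
    by_cases h : ∃ l : L, dist (l.1 p.1) p.2 < c p.1
    · obtain ⟨l, hl⟩ := h
      exact ⟨l, fun _ => hl⟩
    · exact ⟨1, fun h' => absurd h' h⟩
  choose g hg using hg
  obtain ⟨p, hp, hfi⟩ := Subgroup.exists_finiteIndex_of_leftCoset_cover (s := P) (g := g) (H := S)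
    (by
      refine eq_univ_of_forall fun l => ?_
      obtain ⟨p, hp, hlp⟩ := hno l.1 l.2
      refine mem_biUnion hp ?_
      rw [mem_leftCoset_iff, SetLike.mem_coe, hS p hp]
      show dist ((g p).1⁻¹ (l.1 p.1)) p.1 < _
      rw [dist_inv_left]
      exact dist_lt_trans hlp (by rw [dist_comm]; exact hg p ⟨l, hlp⟩))
  refine (hP p hp).2 ((Set.finite_range fun q : L ⧸ S p =>
    ball ((Quotient.out q).1 p.1) (c p.1)).subset ?_)
  rintro B ⟨l, hl, rfl⟩
  refine ⟨((⟨l, hl⟩ : L) : L ⧸ S p), ?_⟩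
  have h1 : ((⟨l, hl⟩ : L) : L ⧸ S p) = ((Quotient.out ((⟨l, hl⟩ : L) : L ⧸ S p) : L) : L ⧸ S p) :=
    (QuotientGroup.out_eq' _).symm
  rw [QuotientGroup.eq, hS p hp] at h1
  dsimp only
  rw [ball_eq_iff (hP p hp).1, ← dist_inv_left]
  exact h1

theorem exists_gt_of_no_max {S : Set ℝ} (hS : S.Nonempty) (hm : ¬ ∃ m, IsGreatest S m)
    (D : Finset ℝ) (hD : ∀ d ∈ D, ∃ s ∈ S, d ≤ s) : ∃ s ∈ S, ∀ d ∈ D, d < s := by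
  have hgt : ∀ s ∈ S, ∃ t ∈ S, s < t := fun s hs => by
    by_contra h
    push Not at h
    exact hm ⟨s, hs, fun t ht => h t ht⟩
  induction D using Finset.induction_on with
  | empty => exact ⟨_, hS.some_mem, by simp⟩
  | insert d D _ ih =>
    obtain ⟨s, hs, hsD⟩ := ih fun d hd => hD d (by simp [hd])
    obtain ⟨t, ht, hdt⟩ := hD d (by simp)
    obtain ⟨u, hu, hmu⟩ : ∃ u ∈ S, max s t < u := by
      rcases max_choice s t with h | h <;> rw [h]
      exacts [hgt s hs, hgt t ht]
    refine ⟨u, hu, fun e he => ?_⟩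
    rcases Finset.mem_insert.1 he with rfl | he
    · exact hdt.trans_lt ((le_max_right _ _).trans_lt hmu)
    · exact (hsD e he).trans ((le_max_left _ _).trans_lt hmu)

/-- For a glued group `L` all of whose ball orbits are infinite or trivial, a finite set `F` has a
translate `h F` in generic position over `F`: each `h x` is as far from all of `F` as `L` permits,
up to a cut-off `c x`. The cut-off is the largest distance by which `L` moves `x` if there is one,
and otherwise such a distance exceeding all relevant distances occurring in `F`. -/
theorem indep {L : Subgroup (X ≃ᵢ X)} (hL : Glued L) (hE : Ext L) (F : Finset X) :
    ∃ c : X → ℝ, (∀ x y, dset L x = dset L y → c x = c y) ∧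
      (∀ x ∈ F, c x ∈ dset L x) ∧
      (∀ x ∈ F, ∀ y ∈ F, ∀ z ∈ F, (∃ s ∈ dset L x, dist y z ≤ s) → dist y z ≤ c x) ∧
      ∃ h ∈ L, ∀ x ∈ F, ∀ y ∈ F, dist (h x) y = max (c x) (dist x y) := by
  classical
  -- admissible cut-offs for a set `S` of distances
  let T : Set ℝ → Set ℝ := fun S =>
    {s | s ∈ S ∧ ∀ x ∈ F, ∀ y ∈ F, (∃ t ∈ S, dist x y ≤ t) → dist x y < s}
  let att : Set ℝ → Prop := fun S => ∃ m, IsGreatest S m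
  let P : Set ℝ → Set ℝ := fun S => if att S then {m | IsGreatest S m} else T S
  have hPne : ∀ S : Set ℝ, S.Nonempty → (P S).Nonempty := by
    intro S hS
    by_cases hm : att S
    · simp only [P, if_pos hm]; exact hm
    · simp only [P, if_neg hm]
      let D : Finset ℝ := ((F ×ˢ F).image fun p => dist p.1 p.2).filter fun d => ∃ t ∈ S, d ≤ t
      obtain ⟨s, hs, hsD⟩ := exists_gt_of_no_max hS hm D fun d hd => (Finset.mem_filter.1 hd).2
      refine ⟨s, hs, fun x hx y hy h => hsD _ (Finset.mem_filter.2 ⟨?_, h⟩)⟩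
      exact Finset.mem_image.2 ⟨(x, y), by simp [hx, hy], rfl⟩
  obtain ⟨pick, hpick⟩ : ∃ pick : Set ℝ → ℝ, ∀ S : Set ℝ, S.Nonempty → pick S ∈ S :=
    ⟨fun S => if h : S.Nonempty then h.some else 0, fun S h => by
      simp only [dif_pos h]; exact h.some_mem⟩
  let c : X → ℝ := fun x => pick (P (dset L x))
  have hcP : ∀ x, c x ∈ P (dset L x) := fun x => hpick _ (hPne _ (dset_nonempty L x))
  have hcA : ∀ x, att (dset L x) → IsGreatest (dset L x) (c x) := fun x hx => by
    have := hcP x; simp only [P, if_pos hx] at this; exact this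
  have hcU : ∀ x, ¬ att (dset L x) → c x ∈ T (dset L x) := fun x hx => by
    have := hcP x; simp only [P, if_neg hx] at this; exact this
  have hcmem : ∀ x, c x ∈ dset L x := fun x => by
    by_cases hx : att (dset L x)
    exacts [(hcA x hx).1, (hcU x hx).1]
  refine ⟨c, fun x y h => by simp only [c, h], fun x _ => hcmem x, ?_, ?_⟩
  · rintro x hx y hy z hz ⟨s, hs, hyz⟩
    by_cases ha : att (dset L x)
    · exact hyz.trans ((hcA x ha).2 hs)
    · exact ((hcU x ha).2 y hy z hz ⟨s, hs, hyz⟩).le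
  -- points with a largest displacement are moved far away by one element `k`
  obtain ⟨k, hk, hkF⟩ := neumann L
    ((F ×ˢ F).filter fun p => att (dset L p.1) ∧ 0 < c p.1) c (by
      intro p hp
      obtain ⟨-, ha, h0⟩ := Finset.mem_filter.1 hp
      refine ⟨h0, fun hfin => ?_⟩
      obtain ⟨l, hl, hcl⟩ := hcmem p.1
      exact (hE _ _ h0 hfin l hl).ne hcl.symm)
  have hkF' : ∀ x ∈ F, ∀ y ∈ F, att (dset L x) → c x ≤ dist (k x) y := by
    intro x hx y hy ha
    by_cases h0 : 0 < c x
    · exact hkF (x, y) (Finset.mem_filter.2 ⟨by simp [hx, hy], ha, h0⟩)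
    · exact (not_lt.1 h0).trans dist_nonneg
  -- the remaining points are moved by elements depending only on the class `M x`
  let M : X → Set X := fun x => {z | ∃ s ∈ dset L x, dist x z ≤ s}
  have hself : ∀ x, x ∈ M x := fun x => ⟨c x, hcmem x, by
    obtain ⟨l, -, h⟩ := hcmem x
    rw [dist_self, h]; exact dist_nonneg⟩
  have hgt : ∀ x, ¬ att (dset L x) → ∀ s ∈ dset L x, ∃ t ∈ dset L x, s < t := fun x hx s hs => by
    by_contra h
    push Not at h
    exact hx ⟨s, hs, fun t ht => h t ht⟩
  have hgtM : ∀ x, ¬ att (dset L x) → ∀ z ∈ M x, ∃ t ∈ dset L x, dist x z < t :=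
    fun x hx z ⟨s, hs, hz⟩ => by
      obtain ⟨t, ht, hst⟩ := hgt x hx s hs
      exact ⟨t, ht, hz.trans_lt hst⟩
  have hU : ∀ x, ¬ att (dset L x) → ∀ z ∈ M x, ¬ att (dset L z) ∧ x ∈ M z := by
    intro x hx z hz
    obtain ⟨t, ht, hzt⟩ := hgtM x hx z hz
    have htz := dset_near ht hzt
    refine ⟨?_, t, htz, by rw [dist_comm]; exact hzt.le⟩
    rintro ⟨m, hm, hm'⟩
    have hmx : m ∈ dset L x :=
      dset_near hm (by rw [dist_comm]; exact hzt.trans_le (hm' htz))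
    obtain ⟨u, hu, hmu⟩ := hgt x hx m hmx
    exact absurd (hm' (dset_near hu (hzt.trans_le ((hm' htz).trans hmu.le)))) hmu.not_ge
  have hMsub : ∀ x, ¬ att (dset L x) → ∀ z ∈ M x, M x ⊆ M z := by
    rintro x hx z hz w hw
    obtain ⟨t, ht, hzt⟩ := hgtM x hx z hz
    obtain ⟨u, hu, hwu⟩ := hgtM x hx w hw
    rcases le_total t u with h | h
    · exact ⟨u, dset_near hu (hzt.trans_le h),
        dist_le_trans (y := x) (by rw [dist_comm]; exact (hzt.trans_le h).le) hwu.le⟩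
    · exact ⟨t, dset_near ht hzt,
        dist_le_trans (y := x) (by rw [dist_comm]; exact hzt.le) (hwu.le.trans h)⟩
  have hMeq : ∀ x, ¬ att (dset L x) → ∀ z ∈ M x, M x = M z := fun x hx z hz =>
    Subset.antisymm (hMsub x hx z hz) (hMsub z (hU x hx z hz).1 x (hU x hx z hz).2)
  have hTsub : ∀ x ∈ F, ∀ z ∈ F, ¬ att (dset L x) → z ∈ M x → T (dset L x) ⊆ T (dset L z) := by
    rintro x hxF z hzF hx hz t ⟨ht, ht'⟩
    have hzt := ht' x hxF z hzF hz
    refine ⟨dset_near ht hzt, ?_⟩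
    rintro y hy w hw ⟨s, hs, hyw⟩
    rcases lt_or_ge (dist x z) s with h | h
    · exact ht' y hy w hw ⟨s, dset_near hs (by rwa [dist_comm]), hyw⟩
    · exact (hyw.trans h).trans_lt hzt
  have hceq : ∀ x ∈ F, ∀ z ∈ F, ¬ att (dset L x) → z ∈ M x → c x = c z := by
    intro x hxF z hzF hx hz
    have hz' := hU x hx z hz
    simp only [c, P, if_neg hx, if_neg hz'.1]
    rw [Subset.antisymm (hTsub x hxF z hzF hx hz) (hTsub z hzF x hxF hz'.1 hz'.2)]
  have hl : ∀ K : Set X, ∃ l ∈ L, ∀ x ∈ F, ¬ att (dset L x) → M x = K → dist (l x) x = c x := by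
    intro K
    by_cases hK : ∃ x ∈ F, ¬ att (dset L x) ∧ M x = K
    · obtain ⟨x, hxF, hx, rfl⟩ := hK
      obtain ⟨l, hl, hlx⟩ := hcmem x
      refine ⟨l, hl, fun z hzF hz hzx => ?_⟩
      have hzM : z ∈ M x := hzx ▸ hself z
      rw [← hceq x hxF z hzF hx hzM, hlx]
      exact move_near (hlx ▸ (hcU x hx).2 x hxF z hzF hzM)
    · exact ⟨1, L.one_mem, fun x hxF hx h => absurd ⟨x, hxF, hx, h⟩ hK⟩
  choose l hlL hlF using hl
  let φ : X → X := fun x => if att (dset L x) then k x else l (M x) x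
  have hφA : ∀ x, att (dset L x) → φ x = k x := fun x hx => if_pos hx
  have hφU : ∀ x, ¬ att (dset L x) → φ x = l (M x) x := fun x hx => if_neg hx
  have hφL : ∀ x, ∃ m ∈ L, m x = φ x := fun x => by
    by_cases hx : att (dset L x)
    exacts [⟨k, hk, (hφA x hx).symm⟩, ⟨_, hlL _, (hφU x hx).symm⟩]
  have hfar : ∀ x z, z ∉ M x → dist (φ x) (φ z) = dist x z := by
    intro x z hz
    obtain ⟨m, hm, hmx⟩ := hφL x
    obtain ⟨n, hn, hnz⟩ := hφL z
    rw [← hmx, ← hnz, ← dist_inv_left, ← mul_app]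
    refine dist_eq_of_lt (not_le.1 fun h => hz ⟨_, ⟨_, L.mul_mem (L.inv_mem hn) hm, rfl⟩, h⟩)
  obtain ⟨h, hh, hhF⟩ := homog hL F φ (by
    intro x hx z hz
    by_cases hxz : z ∈ M x
    swap
    · exact hfar x z hxz
    by_cases hzx : x ∈ M z
    swap
    · rw [dist_comm, hfar z x hzx, dist_comm]
    by_cases hxa : att (dset L x)
    · by_cases hza : att (dset L z)
      · rw [hφA x hxa, hφA z hza, k.dist_eq]
      · exact absurd hxa (hU z hza x hzx).1
    · rw [hφU x hxa, hφU z (hU x hxa z hxz).1, ← hMeq x hxa z hxz, IsometryEquiv.dist_eq])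
    fun x _ => hφL x
  refine ⟨h, hh, fun x hx y hy => ?_⟩
  rw [hhF x hx]
  by_cases hxa : att (dset L x)
  · rw [hφA x hxa]
    have h1 : dist (k x) x ≤ c x := (hcA x hxa).2 ⟨k, hk, rfl⟩
    rcases le_or_gt (dist x y) (c x) with h2 | h2
    · rw [max_eq_left h2]
      exact le_antisymm (dist_le_trans h1 h2) (hkF' x hx y hy hxa)
    · rw [max_eq_right h2.le]
      exact dist_eq_of_lt (h1.trans_lt h2)
  · rw [hφU x hxa]
    have h1 : dist (l (M x) x) x = c x := hlF _ x hx hxa rfl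
    by_cases hy' : y ∈ M x
    · have h2 := (hcU x hxa).2 x hx y hy hy'
      rw [max_eq_left h2.le, dist_comm, dist_eq_of_lt (y := x), dist_comm, h1]
      rw [dist_comm x (l (M x) x), h1, dist_comm]; exact h2
    · have h2 : c x < dist x y := not_le.1 fun h => hy' ⟨_, hcmem x, h⟩
      rw [max_eq_right h2.le]
      exact dist_eq_of_lt (by rwa [h1])

/-- Two tuples from the cosets `g i L` of a group `L` normalized by all `g i` are realized, up to
agreement on a finite set `A`, by tuples conjugate under `L`: the tuple `E` agrees with `f₂` on `A`
and its conjugate by `h⁻¹` agrees with `f₁` on `A`. The conjugator `h` moves `A` to generic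
position, so that the prescriptions for `E` on `A` and on `h A` are compatible. -/
theorem common_conjugate {L : Subgroup (X ≃ᵢ X)} (hL : Glued L) (hE : Ext L) {ι : Type*}
    [Fintype ι] (g f₁ f₂ : ι → X ≃ᵢ X) (hg : ∀ i, Normalizes (g i) L)
    (h₁ : ∀ i, (g i)⁻¹ * f₁ i ∈ L) (h₂ : ∀ i, (g i)⁻¹ * f₂ i ∈ L) (A : Finset X) :
    ∃ h ∈ L, ∃ E : ι → X ≃ᵢ X, (∀ i, (g i)⁻¹ * E i ∈ L) ∧
      ∀ i, ∀ x ∈ A, E i x = f₂ i x ∧ (h⁻¹ * E i * h) x = f₁ i x := by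
  classical
  have hn₁ : ∀ i, Normalizes (f₁ i) L := fun i => by
    have := (hg i).mul (normalizes_of_mem (h₁ i))
    rwa [mul_inv_cancel_left] at this
  have hn₂ : ∀ i, Normalizes (f₂ i) L := fun i => by
    have := (hg i).mul (normalizes_of_mem (h₂ i))
    rwa [mul_inv_cancel_left] at this
  have hm : ∀ i, (f₂ i)⁻¹ * f₁ i ∈ L := fun i => by
    have := L.mul_mem (L.inv_mem (h₂ i)) (h₁ i)
    simpa [mul_assoc] using this
  let F : Finset X := A ∪ Finset.univ.biUnion fun i => A.image (f₁ i) ∪ A.image (f₂ i)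
  have hAF : ∀ x ∈ A, x ∈ F := fun x hx => Finset.mem_union_left _ hx
  have hF₁ : ∀ i, ∀ x ∈ A, f₁ i x ∈ F := fun i x hx => Finset.mem_union_right _
    (Finset.mem_biUnion.2 ⟨i, Finset.mem_univ i,
      Finset.mem_union_left _ (Finset.mem_image_of_mem _ hx)⟩)
  have hF₂ : ∀ i, ∀ x ∈ A, f₂ i x ∈ F := fun i x hx => Finset.mem_union_right _
    (Finset.mem_biUnion.2 ⟨i, Finset.mem_univ i,
      Finset.mem_union_right _ (Finset.mem_image_of_mem _ hx)⟩)
  obtain ⟨c, hc, hcm, hcF, h, hh, hhF⟩ := indep hL hE F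
  have key : ∀ i, ∀ x ∈ A, ∀ y ∈ A, dist (h (f₁ i x)) (f₂ i y) = dist (h x) y := by
    intro i x hx y hy
    have hd : dist (f₁ i x) (f₂ i y) = dist (((f₂ i)⁻¹ * f₁ i) x) y := by
      rw [mul_app, dist_inv_left]
    rw [hhF _ (hF₁ i x hx) _ (hF₂ i y hy), hhF x (hAF x hx) y (hAF y hy),
      hc _ _ (dset_translate (hn₁ i) x)]
    have hmx : dist (((f₂ i)⁻¹ * f₁ i) x) x ∈ dset L x := ⟨_, hm i, rfl⟩
    rcases le_or_gt (dist x y) (c x) with h1 | h1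
    · rw [max_eq_left h1, max_eq_left]
      refine hcF x (hAF x hx) _ (hF₁ i x hx) _ (hF₂ i y hy) ?_
      rw [hd]
      rcases le_total (dist (((f₂ i)⁻¹ * f₁ i) x) x) (c x) with h2 | h2
      · exact ⟨_, hcm x (hAF x hx), dist_le_trans h2 h1⟩
      · exact ⟨_, hmx, dist_le_trans le_rfl (h1.trans h2)⟩
    · rw [hd, dist_eq_of_lt (y := x)]
      by_contra h2
      exact h1.not_ge (hcF x (hAF x hx) x (hAF x hx) y (hAF y hy) ⟨_, hmx, not_lt.1 h2⟩)
  have hEx : ∀ i, ∃ e ∈ L, ∀ x ∈ A, e x = x ∧ f₂ i (e (h x)) = h (f₁ i x) := by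
    intro i
    let q : X ≃ᵢ X := (f₂ i)⁻¹ * h * f₁ i * h⁻¹
    have hq : q ∈ L := by
      have h3 := (((hn₂ i).inv) h).1 hh
      rw [inv_inv] at h3
      have := L.mul_mem (L.mul_mem h3 (hm i)) (L.inv_mem hh)
      simpa [q, mul_assoc] using this
    have hqx : ∀ x, f₂ i (q (h x)) = h (f₁ i x) := fun x => by
      simp only [q, mul_app, inv_app_self, app_inv_self]
    have hqd : ∀ x ∈ A, ∀ y ∈ A, dist (q (h x)) y = dist (h x) y := fun x hx y hy => by
      rw [← key i x hx y hy, ← hqx, (f₂ i).dist_eq]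
    obtain ⟨e, he, heA⟩ := homog hL (A ∪ A.image h) (fun z => if z ∈ A then z else q z) (by
      intro z hz w hw
      by_cases hzA : z ∈ A
      · by_cases hwA : w ∈ A
        · simp only [if_pos hzA, if_pos hwA]
        · simp only [if_pos hzA, if_neg hwA]
          obtain ⟨x, hx, rfl⟩ := Finset.mem_image.1 ((Finset.mem_union.1 hw).resolve_left hwA)
          rw [dist_comm, hqd x hx z hzA, dist_comm]
      · obtain ⟨x, hx, rfl⟩ := Finset.mem_image.1 ((Finset.mem_union.1 hz).resolve_left hzA)
        by_cases hwA : w ∈ A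
        · simp only [if_neg hzA, if_pos hwA]
          exact hqd x hx w hwA
        · simp only [if_neg hzA, if_neg hwA]
          exact q.dist_eq _ _) (by
      intro z _
      by_cases hzA : z ∈ A
      · exact ⟨1, L.one_mem, by simp only [if_pos hzA]; rfl⟩
      · exact ⟨q, hq, by simp only [if_neg hzA]⟩)
    refine ⟨e, he, fun x hx => ⟨?_, ?_⟩⟩
    · rw [heA x (Finset.mem_union_left _ hx), if_pos hx]
    · rw [heA (h x) (Finset.mem_union_right _ (Finset.mem_image_of_mem _ hx))]
      split_ifs with hA
      · -- `h x ∈ A` is at distance zero from itself, hence so is its image under `q`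
        have := hqd x hx _ hA
        rw [dist_self, dist_eq_zero] at this
        rw [← hqx, this]
      · exact hqx x
  choose e heL heA using hEx
  refine ⟨h, hh, fun i => f₂ i * e i, fun i => ?_, fun i x hx => ⟨?_, ?_⟩⟩
  · rw [← mul_assoc]; exact L.mul_mem (h₂ i) (heL i)
  · rw [mul_app, (heA i x hx).1]
  · rw [mul_app, mul_app, mul_app, (heA i x hx).2, inv_app_self]

end Ultra

/-! ### A criterion for a comeager orbit -/

section Comeager
open Filter

variable {G Ω : Type*} [Group G] [TopologicalSpace G]

/-- `w` is *locally dense*: for each neighborhood `V` of the identity, the set `V • w` is dense in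
a neighborhood of `w`. -/
def LocDense [TopologicalSpace Ω] (act : G → Ω → Ω) (w : Ω) : Prop :=
  ∀ V ∈ 𝓝 (1 : G), ∃ O, IsOpen O ∧ w ∈ O ∧
    ∀ W ⊆ O, IsOpen W → W.Nonempty → ∃ h ∈ V, act h w ∈ W

theorem dense_union_compl_closure [TopologicalSpace Ω] (E : Set Ω) :
    Dense (E ∪ (closure E)ᶜ) := fun x => by
  by_cases hx : x ∈ closure E
  · exact closure_mono subset_union_left hx
  · exact subset_closure (Or.inr hx)

/-- Under the transitivity hypotheses `hT` and `hLoc`, comeagerly many points have a dense orbit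
and are locally dense. -/
theorem residual_locDense [FirstCountableTopology G] [TopologicalSpace Ω]
    [SecondCountableTopology Ω] (act : G → Ω → Ω) (hc : ∀ g, Continuous (act g))
    (hT : ∀ W₁ W₂ : Set Ω, IsOpen W₁ → IsOpen W₂ → W₁.Nonempty → W₂.Nonempty →
      ∃ h, ∃ w ∈ W₁, act h w ∈ W₂)
    (hLoc : ∀ V ∈ 𝓝 (1 : G), ∀ U : Set Ω, IsOpen U → U.Nonempty →
      ∃ U' ⊆ U, IsOpen U' ∧ U'.Nonempty ∧ ∀ W₁ ⊆ U', ∀ W₂ ⊆ U', IsOpen W₁ → IsOpen W₂ →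
        W₁.Nonempty → W₂.Nonempty → ∃ h ∈ V, ∃ w ∈ W₁, act h w ∈ W₂) :
    {w | (∀ W : Set Ω, IsOpen W → W.Nonempty → ∃ h, act h w ∈ W) ∧ LocDense act w}
      ∈ residual Ω := by
  obtain ⟨V, hV⟩ := (𝓝 (1 : G)).exists_antitone_basis
  let 𝓢 := TopologicalSpace.countableBasis Ω
  have h𝓢 := TopologicalSpace.isBasis_countableBasis Ω
  have hcount : 𝓢.Countable := TopologicalSpace.countable_countableBasis Ω
  let E : Set G → Set Ω → Set Ω := fun V B => {w | ∃ h ∈ V, act h w ∈ B}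
  have hEo : ∀ V B, IsOpen B → IsOpen (E V B) := fun V B hB => by
    have : E V B = ⋃ h ∈ V, act h ⁻¹' B := by ext w; simp [E]
    rw [this]
    exact isOpen_biUnion fun h _ => hB.preimage (hc h)
  -- points with a dense orbit
  have h1 : ⋂ B ∈ 𝓢, E univ B ∈ residual Ω := by
    rw [countable_bInter_mem hcount]
    intro B hB
    refine residual_of_dense_open (hEo _ _ (h𝓢.isOpen hB)) ?_
    rw [dense_iff_inter_open]
    intro U hU hUne
    obtain ⟨h, w, hw, hh⟩ := hT U B hU (h𝓢.isOpen hB) hUne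
      (TopologicalSpace.nonempty_of_mem_countableBasis hB)
    exact ⟨w, hw, h, mem_univ _, hh⟩
  -- points deciding whether they can be moved into a basic open set by a member of `V n`
  have h2 : ⋂ n, ⋂ B ∈ 𝓢, (E (V n) B ∪ (closure (E (V n) B))ᶜ) ∈ residual Ω := by
    rw [countable_iInter_mem]
    intro n
    rw [countable_bInter_mem hcount]
    intro B hB
    exact residual_of_dense_open ((hEo _ _ (h𝓢.isOpen hB)).union isClosed_closure.isOpen_compl)
      (dense_union_compl_closure _)
  let Q : ℕ → Set (Set Ω) := fun n => {U | IsOpen U ∧ ∀ W₁ ⊆ U, ∀ W₂ ⊆ U, IsOpen W₁ → IsOpen W₂ →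
        W₁.Nonempty → W₂.Nonempty → ∃ h ∈ V n, ∃ w ∈ W₁, act h w ∈ W₂}
  have h3 : ⋂ n, ⋃₀ Q n ∈ residual Ω := by
    rw [countable_iInter_mem]
    intro n
    refine residual_of_dense_open (isOpen_sUnion fun U hU => hU.1) ?_
    rw [dense_iff_inter_open]
    intro U hU hUne
    obtain ⟨U', hU'U, hU', ⟨w, hw⟩, hQ⟩ := hLoc (V n) (hV.1.mem_of_mem trivial) U hU hUne
    exact ⟨w, hU'U hw, U', ⟨hU', hQ⟩, hw⟩
  filter_upwards [h1, h2, h3] with w hw1 hw2 hw3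
  refine ⟨fun W hW ⟨z, hz⟩ => ?_, fun V' hV' => ?_⟩
  · obtain ⟨B, hB, -, hBW⟩ := h𝓢.exists_subset_of_mem_open hz hW
    obtain ⟨h, -, hh⟩ := mem_iInter₂.1 hw1 B hB
    exact ⟨h, hBW hh⟩
  · obtain ⟨n, -, hn⟩ := hV.1.mem_iff.1 hV'
    obtain ⟨U, ⟨hUo, hUQ⟩, hwU⟩ := mem_iInter.1 hw3 n
    refine ⟨U, hUo, hwU, fun W hWU hW ⟨z, hz⟩ => ?_⟩
    obtain ⟨B, hB, hzB, hBW⟩ := h𝓢.exists_subset_of_mem_open hz hW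
    rcases mem_iInter₂.1 (mem_iInter.1 hw2 n) B hB with ⟨h, hh, hhw⟩ | hcl
    · exact ⟨h, hn hh, hBW hhw⟩
    · obtain ⟨h, hh, w', ⟨hw'U, hw'⟩, hw''⟩ := hUQ (U ∩ (closure (E (V n) B))ᶜ) inter_subset_left B
        (hBW.trans hWU) (hUo.inter isClosed_closure.isOpen_compl) (h𝓢.isOpen hB) ⟨w, hwU, hcl⟩
        ⟨z, hzB⟩
      exact absurd (subset_closure (show w' ∈ E (V n) B from ⟨h, hh, hw''⟩)) hw'

theorem LocDense.translate [IsTopologicalGroup G] [TopologicalSpace Ω] {act : G → Ω → Ω}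
    (h1 : ∀ w, act 1 w = w) (hm : ∀ g h w, act (g * h) w = act g (act h w))
    (hc : ∀ g, Continuous (act g)) {w : Ω} (hw : LocDense act w) (g : G) :
    LocDense act (act g w) := by
  intro V hV
  have hV' : {h | g * h * g⁻¹ ∈ V} ∈ 𝓝 (1 : G) := by
    have : Continuous fun h : G => g * h * g⁻¹ := by fun_prop
    exact this.continuousAt.preimage_mem_nhds (by simpa using hV)
  obtain ⟨O, hO, hwO, hOW⟩ := hw _ hV'
  have hinv : ∀ u, act g⁻¹ (act g u) = u := fun u => by rw [← hm, inv_mul_cancel, h1]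
  have hinv' : ∀ u, act g (act g⁻¹ u) = u := fun u => by rw [← hm, mul_inv_cancel, h1]
  refine ⟨act g⁻¹ ⁻¹' O, hO.preimage (hc _), by rwa [mem_preimage, hinv],
    fun W hWO hW ⟨z, hz⟩ => ?_⟩
  obtain ⟨h, hh, hhw⟩ := hOW (act g ⁻¹' W) (fun u hu => by
    have := hWO hu
    rwa [mem_preimage, hinv] at this) (hW.preimage (hc g)) ⟨act g⁻¹ z, by rwa [mem_preimage, hinv']⟩
  refine ⟨_, hh, ?_⟩
  rw [← hm, inv_mul_cancel_right, hm]
  exact hhw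

/-- Two locally dense points with dense orbits lie in one orbit, by a back-and-forth argument: the
translates of the two points are moved closer to each other in turn, the conjugators converging by
the completeness hypothesis `hC`. -/
theorem same_orbit [IsTopologicalGroup G] [MetricSpace Ω] {act : G → Ω → Ω}
    (h1 : ∀ w, act 1 w = w) (hm : ∀ g h w, act (g * h) w = act g (act h w))
    (hc : Continuous fun p : G × Ω => act p.1 p.2)
    (hC : ∃ 𝒱 : ℕ → G → Set G, (∀ k c, 𝒱 k c ∈ 𝓝 1) ∧
      ∀ c : ℕ → G, (∀ k, c (k + 2) * (c k)⁻¹ ∈ 𝒱 k (c k)) →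
        (∃ p, Tendsto (fun k => c (2 * k)) atTop (𝓝 p)) ∧
        ∃ q, Tendsto (fun k => c (2 * k + 1)) atTop (𝓝 q))
    {w w' : Ω} (hw : LocDense act w) (hw' : LocDense act w')
    (hd : ∀ W : Set Ω, IsOpen W → W.Nonempty → ∃ h, act h w ∈ W) :
    ∃ g, w' = act g w := by
  obtain ⟨𝒱, h𝒱, hC⟩ := hC
  have hcg : ∀ g, Continuous (act g) := fun g => hc.comp (by fun_prop : Continuous fun u => (g, u))
  let u : ℕ → Ω := fun j => if Even j then w else w'
  have hu2 : ∀ j, u (j + 2) = u j := fun j => by simp [u, Nat.even_add]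
  have hu : ∀ j, LocDense act (u j) := fun j => by
    by_cases h : Even j <;> simp [u, h, hw, hw']
  let St : ℕ → G × G × Set Ω → Prop := fun j s => IsOpen s.2.2 ∧
    (∀ p ∈ s.2.2, ∀ q ∈ s.2.2, dist p q ≤ 2 * (1 / 2) ^ j) ∧ act s.1 (u j) ∈ s.2.2 ∧
    act s.2.1 (u (j + 1)) ∈ s.2.2 ∧ ∀ W ⊆ s.2.2, IsOpen W → W.Nonempty →
      ∃ h ∈ 𝒱 j s.2.1, act h (act s.2.1 (u (j + 1))) ∈ W
  -- a small neighborhood of a locally dense point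
  have hsmall : ∀ (j : ℕ) (z : Ω), LocDense act z → ∀ c : G, ∃ O, IsOpen O ∧ z ∈ O ∧
      (∀ p ∈ O, ∀ q ∈ O, dist p q ≤ 2 * (1 / 2) ^ j) ∧
      ∀ W ⊆ O, IsOpen W → W.Nonempty → ∃ h ∈ 𝒱 j c, act h z ∈ W := by
    intro j z hz c
    obtain ⟨O, hO, hzO, hOW⟩ := hz _ (h𝒱 j c)
    refine ⟨O ∩ ball z ((1 / 2) ^ j), hO.inter isOpen_ball,
      ⟨hzO, mem_ball_self (by positivity)⟩, fun p hp q hq => ?_,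
      fun W hW => hOW W (hW.trans inter_subset_left)⟩
    have := dist_triangle_right p q z
    have hp := mem_ball.1 hp.2
    have hq := mem_ball.1 hq.2
    linarith
  have hinit : ∃ s, St 0 s := by
    obtain ⟨O, hO, hzO, hdO, hOW⟩ := hsmall 0 (u 1) (hu 1) 1
    obtain ⟨a, ha⟩ := hd O hO ⟨_, hzO⟩
    refine ⟨(a, 1, O), hO, hdO, by simpa [u] using ha, by simpa [h1] using hzO, ?_⟩
    simpa [h1] using hOW
  have hstep : ∀ j s, St j s → ∃ s', St (j + 1) s' ∧ s'.2.1 = s.1 ∧ s'.1 * s.2.1⁻¹ ∈ 𝒱 j s.2.1 := by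
    rintro j ⟨a, b, O⟩ ⟨hO, hdO, ha, hb, hOW⟩
    obtain ⟨O', hO', haO', hdO', hOW'⟩ := hsmall (j + 1) _ ((hu j).translate h1 hm hcg a) a
    obtain ⟨h, hh, hhW⟩ := hOW (O ∩ O') inter_subset_left (hO.inter hO') ⟨_, ha, haO'⟩
    refine ⟨(h * b, a, O'), ⟨hO', hdO', ?_, ?_, ?_⟩, rfl, ?_⟩
    · rw [hm]; exact hhW.2
    · rw [hu2]; exact haO'
    · rw [hu2]; exact hOW'
    · simpa using hh
  choose f hf hf1 hf2 using hstep
  obtain ⟨s₀, hs₀⟩ := hinit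
  let seq : (j : ℕ) → {s // St j s} := fun j =>
    Nat.rec ⟨s₀, hs₀⟩ (fun j s => ⟨f j s.1 s.2, hf j s.1 s.2⟩) j
  let b : ℕ → G := fun j => (seq j).1.2.1
  have hb1 : ∀ j, b (j + 1) = (seq j).1.1 := fun j => hf1 j _ _
  have hb2 : ∀ j, b (j + 2) * (b j)⁻¹ ∈ 𝒱 j (b j) := fun j => by
    rw [hb1 (j + 1)]; exact hf2 j _ _
  have hdist : ∀ j, dist (act (b j) (u (j + 1))) (act (b (j + 1)) (u j)) ≤ 2 * (1 / 2) ^ j :=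
    fun j => by
      obtain ⟨-, h2, h3, h4, -⟩ := (seq j).2
      rw [hb1]
      exact h2 _ h4 _ h3
  obtain ⟨⟨p, hp⟩, q, hq⟩ := hC b hb2
  have hlim : ∀ (z : Ω) {c : ℕ → G} {g : G}, Tendsto c atTop (𝓝 g) →
      Tendsto (fun k => act (c k) z) atTop (𝓝 (act g z)) := fun z c g h =>
    (hc.tendsto (g, z)).comp (h.prodMk_nhds tendsto_const_nhds)
  have heq : act p w' = act q w := by
    have t1 := (hlim w' hp).dist (hlim w hq)
    have t2 : Tendsto (fun k : ℕ => 2 * ((1 : ℝ) / 2) ^ (2 * k)) atTop (𝓝 (2 * 0)) := by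
      refine Tendsto.const_mul _ ?_
      have := tendsto_pow_atTop_nhds_zero_of_lt_one (r := (1 / 2 : ℝ)) (by norm_num) (by norm_num)
      exact this.comp (tendsto_id.const_mul_atTop' (by norm_num))
    rw [mul_zero] at t2
    refine dist_le_zero.1 (le_of_tendsto_of_tendsto' t1 t2 fun k => ?_)
    have := hdist (2 * k)
    simpa [u, Nat.even_add_one] using this
  refine ⟨p⁻¹ * q, ?_⟩
  rw [hm, ← heq, ← hm, inv_mul_cancel, h1]

/-- A criterion for a continuous action to have a comeager orbit. -/
theorem comeager_orbit [IsTopologicalGroup G] [FirstCountableTopology G] [TopologicalSpace Ω]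
    [SecondCountableTopology Ω] [TopologicalSpace.MetrizableSpace Ω] [Nonempty Ω]
    (act : G → Ω → Ω)
    (h1 : ∀ w, act 1 w = w) (hm : ∀ g h w, act (g * h) w = act g (act h w))
    (hc : Continuous fun p : G × Ω => act p.1 p.2)
    (hC : ∃ 𝒱 : ℕ → G → Set G, (∀ k c, 𝒱 k c ∈ 𝓝 1) ∧
      ∀ c : ℕ → G, (∀ k, c (k + 2) * (c k)⁻¹ ∈ 𝒱 k (c k)) →
        (∃ p, Tendsto (fun k => c (2 * k)) atTop (𝓝 p)) ∧
        ∃ q, Tendsto (fun k => c (2 * k + 1)) atTop (𝓝 q))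
    (hT : ∀ W₁ W₂ : Set Ω, IsOpen W₁ → IsOpen W₂ → W₁.Nonempty → W₂.Nonempty →
      ∃ h, ∃ w ∈ W₁, act h w ∈ W₂)
    (hLoc : ∀ V ∈ 𝓝 (1 : G), ∀ U : Set Ω, IsOpen U → U.Nonempty →
      ∃ U' ⊆ U, IsOpen U' ∧ U'.Nonempty ∧ ∀ W₁ ⊆ U', ∀ W₂ ⊆ U', IsOpen W₁ → IsOpen W₂ →
        W₁.Nonempty → W₂.Nonempty → ∃ h ∈ V, ∃ w ∈ W₁, act h w ∈ W₂) :
    ∃ v, {w | ∃ g, w = act g v} ∈ residual Ω := by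
  let _ := TopologicalSpace.metrizableSpaceMetric Ω
  have hcg : ∀ g, Continuous (act g) := fun g => hc.comp (by fun_prop : Continuous fun u => (g, u))
  have hres := residual_locDense act hcg hT hLoc
  by_cases hne : ∃ v, (∀ W : Set Ω, IsOpen W → W.Nonempty → ∃ h, act h v ∈ W) ∧ LocDense act v
  · obtain ⟨v, hv, hv'⟩ := hne
    refine ⟨v, ?_⟩
    filter_upwards [hres] with w hw
    exact same_orbit h1 hm hc hC hv' hw.2 hv
  · refine ⟨Classical.arbitrary Ω, ?_⟩
    filter_upwards [hres] with w hw
    exact absurd ⟨w, hw⟩ hne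

end Comeager

/-! ### The topology of pointwise convergence -/

section Topo
open Filter

theorem isInducing_coe : IsInducing fun g : X ≃ᵢ X => (g : X → X) := ⟨rfl⟩

theorem tendsto_iso_iff {α : Type*} {l : Filter α} {c : α → X ≃ᵢ X} {g : X ≃ᵢ X} :
    Tendsto c l (𝓝 g) ↔ ∀ x, Tendsto (fun a => c a x) l (𝓝 (g x)) := by
  rw [isInducing_coe.tendsto_nhds_iff, tendsto_pi_nhds]; rfl

theorem continuous_eval (x : X) : Continuous fun g : X ≃ᵢ X => g x :=
  (continuous_apply x).comp isInducing_coe.continuous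

theorem exists_min_pos {ι : Type*} (J : Finset ι) {ε : ι → ℝ} (hε : ∀ i, 0 < ε i) :
    ∃ δ > 0, ∀ i ∈ J, δ ≤ ε i := by
  classical
  induction J using Finset.induction_on with
  | empty => exact ⟨1, one_pos, by simp⟩
  | insert a J _ ih =>
    obtain ⟨δ, h0, h⟩ := ih
    refine ⟨min δ (ε a), lt_min h0 (hε a), fun x hx => ?_⟩
    rcases Finset.mem_insert.1 hx with rfl | hx
    exacts [min_le_right _ _, (min_le_left _ _).trans (h x hx)]

theorem mem_nhds_iso {g : X ≃ᵢ X} {U : Set (X ≃ᵢ X)} : U ∈ 𝓝 g ↔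
    ∃ A : Finset X, ∃ ε > 0, ∀ g' : X ≃ᵢ X, (∀ x ∈ A, dist (g' x) (g x) < ε) → g' ∈ U := by
  constructor
  · intro hU
    rw [isInducing_coe.nhds_eq_comap, mem_comap] at hU
    obtain ⟨t, ht, htU⟩ := hU
    rw [nhds_pi, Filter.mem_pi] at ht
    obtain ⟨I, hI, s, hs, hst⟩ := ht
    have hε : ∀ x : X, ∃ ε > 0, ball (g x) ε ⊆ s x := fun x => Metric.mem_nhds_iff.1 (hs x)
    choose ε hε0 hε using hε
    obtain ⟨δ, hδ0, hδ⟩ : ∃ δ > 0, ∀ x ∈ hI.toFinset, δ ≤ ε x :=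
      exists_min_pos _ hε0
    refine ⟨hI.toFinset, δ, hδ0, fun g' hg' => htU (hst fun x hx => hε x ?_)⟩
    have hx' := hI.mem_toFinset.2 hx
    exact (hg' x hx').trans_le (hδ x hx')
  · rintro ⟨A, ε, hε, hU⟩
    have : ∀ᶠ g' in 𝓝 g, ∀ x ∈ A, dist ((g' : X ≃ᵢ X) x) (g x) < ε := by
      rw [Filter.eventually_all_finset]
      intro x _
      exact (continuous_eval x).continuousAt.eventually (ball_mem_nhds _ hε)
    exact mem_of_superset this fun g' hg' => hU g' hg'

instance isoTopologicalGroup : IsTopologicalGroup (X ≃ᵢ X) where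
  continuous_mul := by
    rw [continuous_iff_continuousAt]
    rintro ⟨g, h⟩
    rw [ContinuousAt, tendsto_iso_iff]
    intro x
    have h1 : Tendsto (fun p : (X ≃ᵢ X) × (X ≃ᵢ X) => dist (p.2 x) (h x)) (𝓝 (g, h)) (𝓝 0) := by
      have : Continuous fun p : (X ≃ᵢ X) × (X ≃ᵢ X) => dist (p.2 x) (h x) :=
        ((continuous_eval x).comp continuous_snd).dist continuous_const
      simpa using this.tendsto (g, h)
    have h2 : Tendsto (fun p : (X ≃ᵢ X) × (X ≃ᵢ X) => dist (p.1 (h x)) (g (h x))) (𝓝 (g, h))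
        (𝓝 0) := by
      have : Continuous fun p : (X ≃ᵢ X) × (X ≃ᵢ X) => dist (p.1 (h x)) (g (h x)) :=
        ((continuous_eval (h x)).comp continuous_fst).dist continuous_const
      simpa using this.tendsto (g, h)
    rw [tendsto_iff_dist_tendsto_zero]
    refine squeeze_zero (fun _ => dist_nonneg) (fun p => ?_) (by simpa using h1.add h2)
    rw [← p.1.dist_eq (p.2 x) (h x)]
    exact dist_triangle _ _ _
  continuous_inv := by
    rw [continuous_iff_continuousAt]
    intro g
    rw [ContinuousAt, tendsto_iso_iff]
    intro x
    rw [tendsto_iff_dist_tendsto_zero]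
    have : Continuous fun p : X ≃ᵢ X => dist x (p (g⁻¹ x)) :=
      continuous_const.dist (continuous_eval _)
    have := this.tendsto g
    rw [app_inv_self, dist_self] at this
    refine this.congr fun p => ?_
    rw [dist_inv_left]

theorem cauchySeq_of_eventually {f : ℕ → X} {N : ℕ}
    (h : ∀ k ≥ N, dist (f (k + 1)) (f k) ≤ (1 / 2) ^ k) : CauchySeq f := by
  refine cauchySeq_of_summable_dist ?_
  refine Summable.of_norm_bounded_eventually_nat (g := fun k => (1 / 2 : ℝ) ^ k)
    (summable_geometric_of_lt_one (by norm_num) (by norm_num)) ?_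
  filter_upwards [eventually_ge_atTop N] with k hk
  rw [Real.norm_of_nonneg dist_nonneg, dist_comm]
  exact h k hk

variable [IsUltrametricDist X]

theorem exists_isEmbedding [TopologicalSpace.SeparableSpace X] :
    ∃ D : Set X, D.Countable ∧ IsEmbedding fun (g : X ≃ᵢ X) (d : D) => g d.1 := by
  obtain ⟨D, hD, hD'⟩ := TopologicalSpace.exists_countable_dense X
  refine ⟨D, hD, ?_, fun g g' h => ?_⟩
  · rw [isInducing_iff_nhds]
    intro g
    refine le_antisymm ?_ ?_
    · rw [← tendsto_iff_comap, tendsto_pi_nhds]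
      exact fun d => (continuous_eval _).tendsto g
    · have : Tendsto id
          (comap (fun (g : X ≃ᵢ X) (d : D) => g d.1) (𝓝 fun d : D => g d.1)) (𝓝 g) := by
        rw [tendsto_iso_iff]
        intro x
        rw [Metric.tendsto_nhds]
        intro ε hε
        obtain ⟨d, hd, hdx⟩ := hD'.exists_dist_lt x hε
        have h1 : Tendsto (fun g' : X ≃ᵢ X => g' d)
            (comap (fun (g : X ≃ᵢ X) (d : D) => g d.1) (𝓝 fun d : D => g d.1)) (𝓝 (g d)) :=
          ((continuous_apply (⟨d, hd⟩ : D)).tendsto (fun d : D => g d.1)).comp tendsto_comap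
        filter_upwards [h1 (ball_mem_nhds _ hε)] with g' hg'
        refine dist_lt_trans (y := g' d) (by rw [id, g'.dist_eq]; exact hdx)
          (dist_lt_trans (y := g d) hg' ?_)
        rw [g.dist_eq, dist_comm]; exact hdx
      exact this
  · have h' : (g : X → X) = g' := Continuous.ext_on hD' g.continuous g'.continuous fun d hd =>
      congrFun h (⟨d, hd⟩ : D)
    exact DFunLike.coe_injective h'

instance isoSecondCountable [TopologicalSpace.SeparableSpace X] :
    SecondCountableTopology (X ≃ᵢ X) := by
  obtain ⟨D, hD, h⟩ := exists_isEmbedding (X := X)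
  have := hD.to_subtype
  have := UniformSpace.secondCountable_of_separable X
  exact h.secondCountableTopology

instance isoMetrizable [TopologicalSpace.SeparableSpace X] :
    TopologicalSpace.MetrizableSpace (X ≃ᵢ X) := by
  obtain ⟨D, hD, h⟩ := exists_isEmbedding (X := X)
  have := hD.to_subtype
  exact h.metrizableSpace

theorem exists_limit_iso [CompleteSpace X] {d : ℕ → X} (hd : DenseRange d) (e : ℕ → X ≃ᵢ X)
    (h : ∀ i, CauchySeq fun k => e k (d i)) (h' : ∀ i, CauchySeq fun k => (e k)⁻¹ (d i)) :
    ∃ g, Tendsto e atTop (𝓝 g) := by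
  have key : ∀ e : ℕ → X ≃ᵢ X, (∀ i, CauchySeq fun k => e k (d i)) →
      ∀ x, ∃ y, Tendsto (fun k => e k x) atTop (𝓝 y) := by
    intro e h x
    refine cauchySeq_tendsto_of_complete ?_
    rw [Metric.cauchySeq_iff]
    intro ε hε
    obtain ⟨i, hi⟩ := hd.exists_dist_lt x hε
    obtain ⟨N, hN⟩ := Metric.cauchySeq_iff.1 (h i) ε hε
    refine ⟨N, fun m hm n hn => ?_⟩
    refine dist_lt_trans (y := e m (d i)) (by rw [IsometryEquiv.dist_eq]; exact hi)
      (dist_lt_trans (y := e n (d i)) (hN m hm n hn) ?_)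
    rw [IsometryEquiv.dist_eq, dist_comm]; exact hi
  choose f hf using key e h
  choose f' hf' using key (fun k => (e k)⁻¹) h'
  have hff' : ∀ x, f (f' x) = x := fun x => by
    refine tendsto_nhds_unique (hf (f' x)) ?_
    rw [tendsto_iff_dist_tendsto_zero]
    refine (tendsto_iff_dist_tendsto_zero.1 (hf' x)).congr fun k => ?_
    rw [dist_inv_left, dist_comm]
  have hf'f : ∀ x, f' (f x) = x := fun x => by
    refine tendsto_nhds_unique (hf' (f x)) ?_
    rw [tendsto_iff_dist_tendsto_zero]
    refine (tendsto_iff_dist_tendsto_zero.1 (hf x)).congr fun k => ?_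
    rw [dist_inv_left, dist_comm]
  refine ⟨⟨⟨f, f', hf'f, hff'⟩, Isometry.of_dist_eq fun x y => ?_⟩, tendsto_iso_iff.2 hf⟩
  refine tendsto_nhds_unique ((hf x).dist (hf y)) ?_
  simp only [IsometryEquiv.dist_eq]
  exact tendsto_const_nhds

/-- Completeness of an open subgroup of `Iso(X)`, in the form needed for the back-and-forth
argument: products of elements chosen close enough to the identity converge. -/
theorem complete_openSubgroup [TopologicalSpace.SeparableSpace X] [CompleteSpace X]
    (H : Subgroup (X ≃ᵢ X)) (hH : IsOpen (H : Set (X ≃ᵢ X))) :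
    ∃ 𝒱 : ℕ → H → Set H, (∀ k c, 𝒱 k c ∈ 𝓝 1) ∧
      ∀ c : ℕ → H, (∀ k, c (k + 2) * (c k)⁻¹ ∈ 𝒱 k (c k)) →
        (∃ p, Tendsto (fun k => c (2 * k)) atTop (𝓝 p)) ∧
        ∃ q, Tendsto (fun k => c (2 * k + 1)) atTop (𝓝 q) := by
  have hcl : IsClosed (H : Set (X ≃ᵢ X)) := H.isClosed_of_isOpen hH
  rcases isEmpty_or_nonempty X with hX | hX
  · have hlim : ∀ c : ℕ → H, Tendsto c atTop (𝓝 1) := fun c =>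
      tendsto_subtype_rng.2 (tendsto_iso_iff.2 fun x => hX.elim x)
    exact ⟨fun _ _ => univ, fun _ _ => univ_mem, fun c _ => ⟨⟨1, hlim _⟩, 1, hlim _⟩⟩
  let d := TopologicalSpace.denseSeq X
  have hd : DenseRange d := TopologicalSpace.denseRange_denseSeq X
  let 𝒱 : ℕ → H → Set H := fun k c => {v | ∀ i ∈ Finset.range (k + 1),
    dist (v.1 (c.1 (d i))) (c.1 (d i)) < (1 / 2) ^ k ∧ dist (v.1 (d i)) (d i) < (1 / 2) ^ k}
  refine ⟨𝒱, fun k c => ?_, fun c hc => ?_⟩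
  · have hev : ∀ x : X, ∀ᶠ v : H in 𝓝 1, dist (v.1 x) x < (1 / 2) ^ k := fun x => by
      have : Continuous fun v : H => v.1 x := (continuous_eval x).comp continuous_subtype_val
      exact this.continuousAt.eventually (ball_mem_nhds _ (by positivity))
    show ∀ᶠ v : H in 𝓝 1, ∀ i ∈ Finset.range (k + 1), _
    rw [Filter.eventually_all_finset]
    exact fun i _ => (hev _).and (hev _)
  · have main : ∀ r, ∃ p, Tendsto (fun k => c (2 * k + r)) atTop (𝓝 p) := by
      intro r
      have hpow : ∀ k : ℕ, ((1 : ℝ) / 2) ^ (2 * k + r) ≤ (1 / 2) ^ k := fun k =>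
        pow_le_pow_of_le_one (by norm_num) (by norm_num) (by omega)
      have hidx : ∀ k, 2 * (k + 1) + r = 2 * k + r + 2 := fun k => by ring
      obtain ⟨g, hg⟩ := exists_limit_iso hd (fun k => (c (2 * k + r)).1)
        (fun i => cauchySeq_of_eventually (N := i) fun k hk => by
          have := (hc (2 * k + r) i (Finset.mem_range.2 (by omega))).1
          refine le_trans ?_ (this.le.trans (hpow k))
          rw [hidx]
          simp [mul_app])
        (fun i => cauchySeq_of_eventually (N := i) fun k hk => by
          have := (hc (2 * k + r) i (Finset.mem_range.2 (by omega))).2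
          refine le_trans ?_ (this.le.trans (hpow k))
          rw [hidx, dist_inv_left]
          simp only [Subgroup.coe_mul, Subgroup.coe_inv, mul_app]
          exact (dist_comm _ _).le)
      have hgH : g ∈ H := hcl.mem_of_tendsto hg (Eventually.of_forall fun k => (c _).2)
      exact ⟨⟨g, hgH⟩, tendsto_subtype_rng.2 hg⟩
    exact ⟨main 0, main 1⟩

end Topo

/-! ### Stabilizers of balls and their generic tuples -/

section Stab
open Filter

theorem mem_tau_one {𝓑 : Set (Set X)} {g : X ≃ᵢ X} :
    g ∈ tau (1 : X ≃ᵢ X) 𝓑 ↔ ∀ B ∈ 𝓑, ∀ x, g x ∈ B ↔ x ∈ B := by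
  have h1 : ∀ B : Set X, (1 : X ≃ᵢ X) '' B = B := fun B => Set.image_id B
  constructor
  · intro h B hB x
    have := h B hB
    rw [h1] at this
    constructor
    · intro hx
      rw [← this] at hx
      exact g.injective.mem_set_image.1 hx
    · intro hx
      rw [← this]
      exact mem_image_of_mem _ hx
  · intro h B hB
    rw [h1]
    refine Subset.antisymm (image_subset_iff.2 fun x hx => (h B hB x).2 hx) fun y hy => ?_
    exact ⟨g⁻¹ y, (h B hB _).1 (by rwa [app_inv_self]), app_inv_self g y⟩

/-- The group `τ(1, 𝓑)` of isometries fixing each ball of `𝓑` setwise. -/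
def tauSub (𝓑 : Set (Set X)) : Subgroup (X ≃ᵢ X) where
  carrier := tau 1 𝓑
  mul_mem' := by
    intro a b ha hb
    rw [mem_tau_one] at *
    exact fun B hB x => (ha B hB _).trans (hb B hB x)
  one_mem' := fun _ _ => rfl
  inv_mem' := by
    intro a ha
    rw [mem_tau_one] at *
    intro B hB x
    rw [← ha B hB, app_inv_self]

theorem mem_tauSub {𝓑 : Set (Set X)} {g : X ≃ᵢ X} :
    g ∈ tauSub 𝓑 ↔ ∀ B ∈ 𝓑, ∀ x, g x ∈ B ↔ x ∈ B := mem_tau_one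

theorem tauSub_glued (𝓑 : Set (Set X)) : Glued (tauSub 𝓑) := by
  intro g hg
  rw [mem_tauSub]
  intro B hB x
  obtain ⟨l, hl, hlx⟩ := hg x
  rw [← hlx]
  exact mem_tauSub.1 hl B hB x

/-- The members of `H` moving each point of `V` by less than `δ`. -/
def smallStab [IsUltrametricDist X] (H : Subgroup (X ≃ᵢ X)) (V : Finset X) {δ : ℝ} (hδ : 0 < δ) :
    Subgroup (X ≃ᵢ X) where
  carrier := {l | l ∈ H ∧ ∀ v ∈ V, dist (l v) v < δ}
  mul_mem' := by
    rintro a b ⟨ha, ha'⟩ ⟨hb, hb'⟩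
    exact ⟨H.mul_mem ha hb, fun v hv => dist_lt_trans (y := a v)
      (by rw [mul_app, a.dist_eq]; exact hb' v hv) (ha' v hv)⟩
  one_mem' := ⟨H.one_mem, fun v _ => by simpa using hδ⟩
  inv_mem' := by
    rintro a ⟨ha, ha'⟩
    exact ⟨H.inv_mem ha, fun v hv => by rw [dist_inv_left, dist_comm]; exact ha' v hv⟩

/-- A neighborhood of a tuple contains all tuples approximating it on some finite set. -/
theorem mem_nhds_tuple {H : Subgroup (X ≃ᵢ X)} {ι : Type*} [Fintype ι] {w : ι → H}
    {U : Set (ι → H)} (hU : U ∈ 𝓝 w) : ∃ A : Finset X, ∃ ε > 0, ∀ w' : ι → H,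
      (∀ i, ∀ x ∈ A, dist ((w' i).1 x) ((w i).1 x) < ε) → w' ∈ U := by
  classical
  rw [nhds_pi, Filter.mem_pi] at hU
  obtain ⟨I, -, s, hs, hsU⟩ := hU
  have h1 : ∀ i, ∃ A : Finset X, ∃ ε > 0, ∀ g : H,
      (∀ x ∈ A, dist (g.1 x) ((w i).1 x) < ε) → g ∈ s i := fun i => by
    obtain ⟨u, hu, hus⟩ := mem_nhds_subtype _ _ _ |>.1 (hs i)
    obtain ⟨A, ε, hε, h⟩ := mem_nhds_iso.1 hu
    exact ⟨A, ε, hε, fun g hg => hus (h g.1 hg)⟩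
  choose A ε hε h using h1
  obtain ⟨δ, hδ, hδε⟩ := exists_min_pos Finset.univ hε
  refine ⟨Finset.univ.biUnion A, δ, hδ, fun w' hw' => hsU fun i _ => h i _ fun x hx => ?_⟩
  exact (hw' i x (Finset.mem_biUnion.2 ⟨i, Finset.mem_univ i, hx⟩)).trans_le
    (hδε i (Finset.mem_univ i))

variable [IsUltrametricDist X]

theorem smallStab_glued {H : Subgroup (X ≃ᵢ X)} (hH : Glued H) (V : Finset X) {δ : ℝ}
    (hδ : 0 < δ) : Glued (smallStab H V hδ) := by
  intro g hg
  refine ⟨hH g fun x => ?_, fun v hv => ?_⟩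
  · obtain ⟨l, hl, h⟩ := hg x
    exact ⟨l, hl.1, h⟩
  · obtain ⟨l, hl, h⟩ := hg v
    rw [← h]; exact hl.2 v hv

theorem smallStab_normalizes {H : Subgroup (X ≃ᵢ X)} (V : Finset X) {δ : ℝ} (hδ : 0 < δ)
    {g : X ≃ᵢ X} (hg : g ∈ H) (hgV : ∀ v ∈ V, g v ∈ V) : Normalizes g (smallStab H V hδ) := by
  classical
  have himg : V.image g = V := Finset.eq_of_subset_of_card_le
    (Finset.image_subset_iff.2 hgV) (Finset.card_image_of_injective V g.injective).ge
  have hgV' : ∀ v ∈ V, g⁻¹ v ∈ V := fun v hv => by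
    rw [← himg] at hv
    obtain ⟨x, hx, rfl⟩ := Finset.mem_image.1 hv
    rwa [inv_app_self]
  have key : ∀ g ∈ H, (∀ v ∈ V, g⁻¹ v ∈ V) → ∀ l ∈ smallStab H V hδ,
      g * l * g⁻¹ ∈ smallStab H V hδ := by
    rintro g hg hgV l ⟨hl, hl'⟩
    refine ⟨H.mul_mem (H.mul_mem hg hl) (H.inv_mem hg), fun v hv => ?_⟩
    have := hl' _ (hgV v hv)
    rwa [dist_comm, dist_inv_left, dist_comm] at this
  refine fun l => ⟨key g hg hgV' l, fun h => ?_⟩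
  have := key g⁻¹ (H.inv_mem hg) (by simpa using hgV) _ h
  simpa [mul_assoc] using this

theorem smallStab_mem_nhds {H : Subgroup (X ≃ᵢ X)} (hH : IsOpen (H : Set (X ≃ᵢ X)))
    (V : Finset X) {δ : ℝ} (hδ : 0 < δ) : (smallStab H V hδ : Set (X ≃ᵢ X)) ∈ 𝓝 1 := by
  refine inter_mem (hH.mem_nhds H.one_mem) ?_
  exact mem_nhds_iso.2 ⟨V, δ, hδ, fun g hg => hg⟩

theorem tauSub_isOpen {𝓑 : Set (Set X)} (h𝓑 : FDFamily 𝓑) :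
    IsOpen (tauSub 𝓑 : Set (X ≃ᵢ X)) := by
  refine Subgroup.isOpen_of_mem_nhds _ (g := 1) ?_
  have : ∀ᶠ g : X ≃ᵢ X in 𝓝 1, ∀ B ∈ 𝓑, ∀ x, g x ∈ B ↔ x ∈ B := by
    rw [Filter.eventually_all_finite h𝓑.1]
    intro B hB
    obtain ⟨r, hr, b, rfl⟩ := h𝓑.2.1 B hB
    refine mem_nhds_iso.2 ⟨{b}, r, hr, fun g hg x => ?_⟩
    have hgb : dist (g b) b < r := hg b (by simp)
    have h1 : ball b r = ball (g b) r := (ball_eq_iff hr).2 (by rwa [dist_comm])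
    nth_rewrite 1 [h1]
    rw [mem_ball, mem_ball, g.dist_eq]
  exact mem_of_superset this fun g hg => mem_tauSub.2 hg

theorem exists_tau_subset {U : Set (X ≃ᵢ X)} (hU : U ∈ 𝓝 1) :
    ∃ 𝓑 : Set (Set X), FDFamily 𝓑 ∧ tau 1 𝓑 ⊆ U := by
  obtain ⟨A, ε, hε, hAU⟩ := mem_nhds_iso.1 hU
  refine ⟨(fun x => ball x ε) '' (A : Set X), ⟨A.finite_toSet.image _, ?_, ?_⟩, fun g hg => ?_⟩
  · rintro _ ⟨x, -, rfl⟩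
    exact ⟨ε, hε, x, rfl⟩
  · rintro _ ⟨x, -, rfl⟩ _ ⟨y, -, rfl⟩ hxy
    exact (IsUltrametricDist.ball_eq_or_disjoint x y ε).resolve_left hxy
  · refine hAU g fun x hx => ?_
    exact (mem_tau_one.1 hg _ ⟨x, hx, rfl⟩ x).2 (mem_ball_self hε)

/-- Open sets of tuples meeting `∏ g i L` are connected by conjugation with members of `L`. -/
theorem connect {H L : Subgroup (X ≃ᵢ X)} (hLH : L ≤ H) (hL : Glued L) (hE : Ext L) {ι : Type*}
    [Fintype ι] (g : ι → H) (hg : ∀ i, Normalizes (g i).1 L) {W₁ W₂ : Set (ι → H)}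
    (hW₁ : IsOpen W₁) (hW₂ : IsOpen W₂) {f₁ f₂ : ι → H} (hf₁ : f₁ ∈ W₁) (hf₂ : f₂ ∈ W₂)
    (h₁ : ∀ i, (g i).1⁻¹ * (f₁ i).1 ∈ L) (h₂ : ∀ i, (g i).1⁻¹ * (f₂ i).1 ∈ L) :
    ∃ h : H, h.1 ∈ L ∧ ∃ w ∈ W₁, (fun i => h * w i * h⁻¹) ∈ W₂ := by
  classical
  obtain ⟨A₁, ε₁, hε₁, hA₁⟩ := mem_nhds_tuple (hW₁.mem_nhds hf₁)
  obtain ⟨A₂, ε₂, hε₂, hA₂⟩ := mem_nhds_tuple (hW₂.mem_nhds hf₂)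
  obtain ⟨h, hh, E, hEL, hEA⟩ := common_conjugate hL hE (fun i => (g i).1) (fun i => (f₁ i).1)
    (fun i => (f₂ i).1) hg h₁ h₂ (A₁ ∪ A₂)
  have hEH : ∀ i, E i ∈ H := fun i => by
    have := H.mul_mem (g i).2 (hLH (hEL i))
    rwa [mul_inv_cancel_left] at this
  let h' : H := ⟨h, hLH hh⟩
  let E' : ι → H := fun i => ⟨E i, hEH i⟩
  refine ⟨h', hh, fun i => h'⁻¹ * E' i * h', hA₁ _ fun i x hx => ?_, ?_⟩
  · have : (h'⁻¹ * E' i * h').1 x = (f₁ i).1 x := (hEA i x (Finset.mem_union_left _ hx)).2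
    rw [this, dist_self]; exact hε₁
  · have : (fun i => h' * (h'⁻¹ * E' i * h') * h'⁻¹) = E' := by
      funext i; group
    rw [this]
    refine hA₂ _ fun i x hx => ?_
    have : (E' i).1 x = (f₂ i).1 x := (hEA i x (Finset.mem_union_right _ hx)).1
    rw [this, dist_self]; exact hε₂

/-- If every FD family can be strengthened to an extremal one, the stabilizer of an extremal
FD family has ample generics. -/
theorem tauSub_ampleGenerics [TopologicalSpace.SeparableSpace X] [CompleteSpace X]
    (h : ∀ 𝓑 : Set (Set X), FDFamily 𝓑 →
      ∃ 𝓑' : Set (Set X), FDFamily 𝓑' ∧ Strengthens 𝓑' 𝓑 ∧ ExtremalityProperty X 𝓑')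
    {𝓑 : Set (Set X)} (h𝓑 : FDFamily 𝓑) (hE : ExtremalityProperty X 𝓑) :
    HasAmpleGenerics (tauSub 𝓑) := by
  classical
  intro n
  set H := tauSub 𝓑 with hHdef
  have hHo : IsOpen (H : Set (X ≃ᵢ X)) := tauSub_isOpen h𝓑
  have hHg : Glued H := tauSub_glued 𝓑
  have hHE : Ext H := fun x r hr hfin l hl => fixed_of_finOrb hE (fun g hg => hg) hr hfin l hl
  have : SecondCountableTopology H := IsEmbedding.subtypeVal.secondCountableTopology
  have : TopologicalSpace.MetrizableSpace H := IsEmbedding.subtypeVal.metrizableSpace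
  let act : H → (Fin (n + 1) → H) → Fin (n + 1) → H := fun g w i => g * w i * g⁻¹
  obtain ⟨v, hv⟩ := comeager_orbit act (fun w => by funext i; simp [act])
    (fun g k w => by funext i; simp [act, mul_assoc])
    (by
      refine continuous_pi fun i => ?_
      show Continuous fun p : H × (Fin (n + 1) → H) => p.1 * p.2 i * p.1⁻¹
      fun_prop)
    (complete_openSubgroup H hHo)
    (by
      rintro W₁ W₂ hW₁ hW₂ ⟨f₁, hf₁⟩ ⟨f₂, hf₂⟩
      obtain ⟨k, -, w, hw, hkw⟩ := connect le_rfl hHg hHE (fun _ => (1 : H))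
        (fun _ => normalizes_of_mem H.one_mem) hW₁ hW₂ hf₁ hf₂
        (fun i => by simp) (fun i => by simp)
      exact ⟨k, w, hw, hkw⟩)
    (by
      rintro V hV U hU ⟨g₀, hg₀⟩
      obtain ⟨A, ε, hε, hAU⟩ := mem_nhds_tuple (hU.mem_nhds hg₀)
      obtain ⟨V₁, hV₁, hV₁V⟩ := mem_nhds_subtype _ _ _ |>.1 hV
      obtain ⟨A₂, ε₂, hε₂, hAV⟩ := mem_nhds_iso.1 hV₁
      -- a finite set permuted by members of `H` agreeing on `A` with the given tuple
      let V₀ : Finset X := A ∪ A₂ ∪ Finset.univ.biUnion fun i => A.image (g₀ i).1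
      obtain ⟨V', hV'⟩ := eppa hHg V₀
      choose g hgH hgV hgV' using fun i => hV'.ext (g₀ i).1 (g₀ i).2
      have hgA : ∀ i, ∀ x ∈ A, g i x = (g₀ i).1 x := fun i x hx => hgV i x
        (Finset.mem_union_left _ (Finset.mem_union_left _ hx))
        (Finset.mem_union_right _ (Finset.mem_biUnion.2
          ⟨i, Finset.mem_univ i, Finset.mem_image_of_mem _ hx⟩))
      have hδ : 0 < min ε ε₂ := lt_min hε hε₂
      let L₁ := smallStab H V' hδ
      obtain ⟨𝓑₁, h𝓑₁, hL₁⟩ := exists_tau_subset (smallStab_mem_nhds hHo V' hδ)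
      obtain ⟨𝓑₂, h𝓑₂, hstr, hE₂⟩ := h 𝓑₁ h𝓑₁
      obtain ⟨hsub, hLE⟩ := finPart_ext h𝓑₂ hE₂ (L := L₁) (fun k hk => hL₁ (hstr hk))
      let L := finPart L₁
      have hLg : Glued L := finPart_glued (smallStab_glued hHg V' hδ)
      have hLn : ∀ i, Normalizes (g i) L := fun i =>
        (smallStab_normalizes V' hδ (hgH i) (hgV' i)).finPart
      have hLo : IsOpen (L : Set (X ≃ᵢ X)) := Subgroup.isOpen_of_mem_nhds _ (g := 1)
        (mem_of_superset ((tauSub_isOpen h𝓑₂).mem_nhds (tauSub 𝓑₂).one_mem) hsub)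
      have hLH : L ≤ H := fun l hl => hl.1.1
      have hLd : ∀ l ∈ L, ∀ v ∈ V', dist (l v) v < min ε ε₂ := fun l hl => hl.1.2
      let g' : Fin (n + 1) → H := fun i => ⟨g i, hgH i⟩
      refine ⟨{w | ∀ i, (g i)⁻¹ * (w i).1 ∈ L}, fun w hw => hAU w fun i x hx => ?_, ?_,
        ⟨g', fun i => ?_⟩, ?_⟩
      · have hxV : x ∈ V' := hV'.sub (Finset.mem_union_left _ (Finset.mem_union_left _ hx))
        have := hLd _ (hw i) x hxV
        rw [mul_app, dist_inv_left, hgA i x hx] at this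
        exact this.trans_le (min_le_left _ _)
      · have : {w : Fin (n + 1) → H | ∀ i, (g i)⁻¹ * (w i).1 ∈ L} =
            ⋂ i, (fun w : Fin (n + 1) → H => (g i)⁻¹ * (w i).1) ⁻¹' (L : Set (X ≃ᵢ X)) := by
          ext w; simp
        rw [this]
        exact isOpen_iInter_of_finite fun i => hLo.preimage (by fun_prop)
      · show (g i)⁻¹ * g i ∈ L
        rw [inv_mul_cancel]; exact L.one_mem
      · rintro W₁ hW₁' W₂ hW₂' hW₁ hW₂ ⟨f₁, hf₁⟩ ⟨f₂, hf₂⟩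
        obtain ⟨k, hkL, w, hw, hkw⟩ := connect hLH hLg hLE g' hLn hW₁ hW₂ hf₁ hf₂
          (hW₁' hf₁) (hW₂' hf₂)
        refine ⟨k, hV₁V (hAV k.1 fun x hx => ?_), w, hw, hkw⟩
        have hxV : x ∈ V' := hV'.sub (Finset.mem_union_left _ (Finset.mem_union_right _ hx))
        exact (hLd _ hkL x hxV).trans_le (min_le_right _ _))
  refine ⟨v, ?_⟩
  filter_upwards [hv] with w hw
  obtain ⟨k, hk⟩ := hw
  exact ⟨k, fun i => congrFun hk i⟩

end Stab

end UltraGen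

open UltraGen in
theorem iso_nhds_basis_open_subgroups_ample_generics
    {X : Type*} [MetricSpace X] [TopologicalSpace.SeparableSpace X] [CompleteSpace X]
    [IsUltrametricDist X]
    (h : ∀ 𝓑 : Set (Set X), FDFamily 𝓑 →
      ∃ 𝓑' : Set (Set X), FDFamily 𝓑' ∧ Strengthens 𝓑' 𝓑 ∧ ExtremalityProperty X 𝓑') :
    ∀ U ∈ nhds (1 : X ≃ᵢ X), ∃ H : Subgroup (X ≃ᵢ X),
      IsOpen (H : Set (X ≃ᵢ X)) ∧ (H : Set (X ≃ᵢ X)) ⊆ U ∧ HasAmpleGenerics H := by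
  intro U hU
  obtain ⟨𝓑₀, h𝓑₀, hsub⟩ := exists_tau_subset hU
  obtain ⟨𝓑, h𝓑, hstr, hE⟩ := h 𝓑₀ h𝓑₀
  exact ⟨tauSub 𝓑, tauSub_isOpen h𝓑, fun g hg => hsub (hstr hg), tauSub_ampleGenerics h h𝓑 hE⟩
end

section
/- Let X be a Polish ultrametric space. Suppose that there exists an FD family 𝓑 in X that cannot be strengthened to any FD family 𝓑' such that X has the 𝓑'-extremality property. Then no open subgroup V of Iso(X) has a conjugacy class that is comeager in V. -/
/-!
The argument exhibits sign characters on stabilizers of finitely many balls.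

Given an open subgroup `V`, let `W = St Q ≤ V` be the stabilizer of finitely many balls, among
them the members of `𝓑`. Every refinement of `Q` to a finite set of balls comes from an FD family
strengthening `𝓑`, so some ball fails to be extremal for it. This produces a *twin pair*: two balls
of radius `D` at distance exactly `D`, one mapped to the other by an element of the stabilizer,
with a finite orbit (`exists_twin_St`). As finite-orbit balls have stabilizers of finite index, the orbit is
still finite under `W`, and a pigeonhole argument yields a twin pair of `W` that avoids any
prescribed finite set of points (`exists_free_twin`).

In an ultrametric space, exchanging the two balls of a twin pair and fixing everything else is an
isometry `s` (`exists_swap`). It can be made arbitrarily close to the identity, lies in `W`, and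
acts as a transposition on the finite `W`-orbit of the pair. The sign of the permutation induced
on this orbit is a continuous, conjugation-invariant character of `W` that distinguishes `g` from
`g * s`; hence every `W`-conjugacy class is nowhere dense (`isNowhereDense_class`).

Finally, `W` has countably many right cosets in `V`, so a `V`-conjugacy class meets `W` in a
countable union of `W`-conjugacy classes, which is meager. Since `Iso(X)` is Polish
(`polishSpace_iso`) and `W` is open and nonempty, Baire category excludes a comeager class.
-/

open Metric Set Topology

namespace UltraProof
open UltraGen

variable {X : Type*} [MetricSpace X]

/-! ### The isometry group is a Polish space -/

/-- Basic neighbourhood of `g`: isometries which agree with `g` at the point `q.1`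
up to an error `< q.2`, for every pair `q ∈ Q`. -/
def nb (g : X ≃ᵢ X) (Q : Set (X × ℝ)) : Set (X ≃ᵢ X) :=
  {g' | ∀ q ∈ Q, dist (g' q.1) (g q.1) < q.2}

lemma continuous_eval (x : X) : Continuous fun g : X ≃ᵢ X => g x :=
  (continuous_apply x).comp continuous_induced_dom

lemma isOpen_nb (g : X ≃ᵢ X) {Q : Set (X × ℝ)} (hQ : Q.Finite) : IsOpen (nb g Q) := by
  have : nb g Q = ⋂ q ∈ Q, {g' : X ≃ᵢ X | dist (g' q.1) (g q.1) < q.2} := by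
    ext; simp [nb]
  rw [this]
  exact hQ.isOpen_biInter fun q _ =>
    isOpen_lt ((continuous_eval q.1).dist continuous_const) continuous_const

lemma exists_nb_subset {U : Set (X ≃ᵢ X)} (hU : IsOpen U) {g : X ≃ᵢ X} (hg : g ∈ U) :
    ∃ Q : Set (X × ℝ), Q.Finite ∧ (∀ q ∈ Q, 0 < q.2) ∧ nb g Q ⊆ U := by
  classical
  obtain ⟨O, hO, rfl⟩ := isOpen_induced_iff.1 hU
  obtain ⟨I, u, hu, hsub⟩ := isOpen_pi_iff.1 hO _ hg
  have : ∀ a ∈ I, ∃ ε > 0, Metric.ball (g a) ε ⊆ u a := fun a ha =>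
    Metric.isOpen_iff.1 (hu a ha).1 _ (hu a ha).2
  choose! ε hε hball using this
  refine ⟨(fun a => (a, ε a)) '' (I : Set X), I.finite_toSet.image _, ?_, ?_⟩
  · rintro _ ⟨a, ha, rfl⟩
    exact hε a ha
  · intro g' hg'
    apply hsub
    intro a ha
    exact hball a ha (hg' (a, ε a) ⟨a, ha, rfl⟩)

lemma dist_apply_inv (g : X ≃ᵢ X) (x y : X) : dist (g x) y = dist x (g⁻¹ y) := by
  conv_lhs => rw [← IsometryEquiv.apply_inv_self g y]
  exact g.dist_eq _ _

lemma continuous_eval_inv (x : X) : Continuous fun g : X ≃ᵢ X => g⁻¹ x := by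
  rw [continuous_iff_continuousAt]
  intro g₀
  rw [ContinuousAt, tendsto_iff_dist_tendsto_zero]
  have h : Continuous fun g : X ≃ᵢ X => dist (g (g₀⁻¹ x)) x :=
    (continuous_eval _).dist continuous_const
  have h' := h.tendsto g₀
  rw [IsometryEquiv.apply_inv_self, dist_self] at h'
  refine h'.congr fun g => ?_
  rw [dist_apply_inv, dist_comm]

/-- The values of `g` and of its inverse on a set `s`. -/
def evalPair (s : Set X) (g : X ≃ᵢ X) : (s → X) × (s → X) :=
  (fun a => g a, fun a => g⁻¹ a)

lemma continuous_evalPair (s : Set X) : Continuous (evalPair s) :=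
  (continuous_pi fun a : s => continuous_eval a.1).prodMk
    (continuous_pi fun a : s => continuous_eval_inv a.1)

lemma isInducing_evalPair {s : Set X} (hs : Dense s) : IsInducing (evalPair s) := by
  refine ⟨le_antisymm (continuous_evalPair s).le_induced ?_⟩
  refine continuous_iff_le_induced.1 ?_
  let _ : TopologicalSpace (X ≃ᵢ X) := TopologicalSpace.induced (evalPair s) inferInstance
  refine continuous_pi fun x => ?_
  -- an isometry is controlled at `x` by its value at a nearby point of the dense set
  have hc : ∀ a : s, Continuous fun g : X ≃ᵢ X => g a := fun a =>
    (continuous_apply a).comp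
      (continuous_fst.comp (continuous_induced_dom (f := evalPair s)))
  rw [continuous_iff_continuousAt]
  intro g₀
  rw [ContinuousAt, Metric.tendsto_nhds]
  intro ε hε
  obtain ⟨a, hxa, has⟩ := Metric.dense_iff.1 hs x (ε / 3) (by positivity)
  filter_upwards [Metric.tendsto_nhds.1 ((hc ⟨a, has⟩).tendsto g₀) (ε / 3) (by positivity)]
    with g hg
  have h1 : dist (g x) (g a) < ε / 3 := by rw [g.dist_eq, dist_comm]; exact hxa
  have h2 : dist (g₀ a) (g₀ x) < ε / 3 := by rw [g₀.dist_eq]; exact hxa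
  have h3 := dist_triangle4 (g x) (g a) (g₀ a) (g₀ x)
  linarith

lemma injective_evalPair {s : Set X} (hs : Dense s) : Function.Injective (evalPair s) := by
  intro g g' h
  have h1 : ∀ a : s, g a = g' a := fun a => congrFun (congrArg Prod.fst h) a
  apply IsometryEquiv.ext
  intro x
  exact congrFun (Continuous.ext_on hs g.continuous g'.continuous fun a ha => h1 ⟨a, ha⟩) x

/-- The relation `dist (g a) b = dist a (g⁻¹ b)` together with isometricity cuts out the
range: it passes to the extensions by continuity and makes them mutually inverse. -/
lemma range_evalPair [CompleteSpace X] {s : Set X} (hs : Dense s) :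
    range (evalPair s) = {p : (s → X) × (s → X) |
      (∀ a b : s, dist (p.1 a) (p.1 b) = dist a b) ∧ (∀ a b : s, dist (p.2 a) (p.2 b) = dist a b) ∧
      ∀ a b : s, dist (p.1 a) b = dist (a : X) (p.2 b)} := by
  ext ⟨φ, ψ⟩
  constructor
  · rintro ⟨g, hg⟩
    obtain ⟨rfl, rfl⟩ := Prod.mk.inj hg
    exact ⟨fun a b => g.dist_eq _ _, fun a b => g⁻¹.dist_eq _ _, fun a b => dist_apply_inv _ _ _⟩
  · rintro ⟨h1, h2, h3⟩
    dsimp only at h1 h2 h3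
    have i1 : Isometry φ := Isometry.of_dist_eq h1
    have i2 : Isometry ψ := Isometry.of_dist_eq h2
    have c1 := (hs.uniformContinuous_extend i1.uniformContinuous).continuous
    have c2 := (hs.uniformContinuous_extend i2.uniformContinuous).continuous
    set f := hs.extend φ
    set k := hs.extend ψ
    have e1 : ∀ a : s, f a = φ a := fun a => hs.extend_eq i1.continuous a
    have e2 : ∀ a : s, k a = ψ a := fun a => hs.extend_eq i2.continuous a
    have hfk : ∀ x y, dist (f x) y = dist x (k y) := by
      intro x y
      refine hs.induction (P := fun x => dist (f x) y = dist x (k y)) ?_ ?_ x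
      · intro a ha
        refine hs.induction (P := fun y => dist (f a) y = dist a (k y)) ?_ ?_ y
        · intro b hb
          have := h3 ⟨a, ha⟩ ⟨b, hb⟩
          rw [← e1, ← e2] at this
          exact this
        · exact isClosed_eq (by fun_prop) (by fun_prop)
      · exact isClosed_eq (by fun_prop) (by fun_prop)
    have hf : Isometry f := by
      refine Isometry.of_dist_eq fun x y => ?_
      refine hs.induction (P := fun x => dist (f x) (f y) = dist x y) ?_ ?_ x
      · intro a ha
        refine hs.induction (P := fun y => dist (f a) (f y) = dist a y) ?_ ?_ y
        · intro b hb
          have := h1 ⟨a, ha⟩ ⟨b, hb⟩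
          rw [← e1, ← e1] at this
          exact this
        · exact isClosed_eq (by fun_prop) (by fun_prop)
      · exact isClosed_eq (by fun_prop) (by fun_prop)
    have r1 : ∀ y, f (k y) = y := fun y => dist_eq_zero.1 (by rw [hfk, dist_self])
    have r2 : ∀ x, k (f x) = x := fun x => (dist_eq_zero.1 (by rw [← hfk, dist_self])).symm
    refine ⟨⟨⟨f, k, r2, r1⟩, hf⟩, ?_⟩
    exact Prod.ext (funext e1) (funext e2)

lemma polishSpace_iso [TopologicalSpace.SeparableSpace X] [CompleteSpace X] :
    PolishSpace (X ≃ᵢ X) := by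
  obtain ⟨s, hsc, hs⟩ := TopologicalSpace.exists_countable_dense X
  have : Countable s := hsc
  have : SecondCountableTopology X := UniformSpace.secondCountable_of_separable X
  refine IsClosedEmbedding.polishSpace (f := evalPair s)
    ⟨⟨isInducing_evalPair hs, injective_evalPair hs⟩, ?_⟩
  rw [range_evalPair hs]
  simp only [ofPred_and, ofPred_forall]
  refine IsClosed.inter ?_ (IsClosed.inter ?_ ?_) <;>
  · refine isClosed_iInter fun a => isClosed_iInter fun b => isClosed_eq ?_ ?_ <;> fun_prop

/-! ### Stabilizers of finitely many balls and twin pairs -/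

/-- The subgroup of isometries stabilizing each ball `ball q.1 q.2`, `q ∈ Q`. -/
def St (Q : Set (X × ℝ)) : Subgroup (X ≃ᵢ X) where
  carrier := {g | ∀ q ∈ Q, g '' ball q.1 q.2 = ball q.1 q.2}
  one_mem' q _ := by simp
  mul_mem' {a b} ha hb q hq := by
    rw [IsometryEquiv.coe_mul, image_comp, hb q hq, ha q hq]
  inv_mem' {a} ha q hq := by
    conv_lhs => rw [← ha q hq]
    rw [← image_comp, ← IsometryEquiv.coe_mul]
    simp

/-- The ball of radius `D` around `x` has finitely many images under `W`. -/
def FinOrb (W : Subgroup (X ≃ᵢ X)) (x : X) (D : ℝ) : Prop :=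
  ((fun g : X ≃ᵢ X => ball (g x) D) '' (W : Set (X ≃ᵢ X))).Finite

/-- A twin pair: two balls of radius `D`, at distance exactly `D`, one being the image of the
other under `k ∈ W`, whose `W`-orbit is finite. -/
structure Twin (W : Subgroup (X ≃ᵢ X)) (x : X) (D : ℝ) (k : X ≃ᵢ X) : Prop where
  mem : k ∈ W
  pos : 0 < D
  dist_eq : dist x (k x) = D
  fin : FinOrb W x D

lemma FinOrb.translate {W : Subgroup (X ≃ᵢ X)} {x : X} {D : ℝ} (h : FinOrb W x D)
    {w : X ≃ᵢ X} (hw : w ∈ W) : FinOrb W (w x) D := by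
  refine h.subset ?_
  rintro _ ⟨g, hg, rfl⟩
  exact ⟨g * w, W.mul_mem hg hw, rfl⟩

lemma Twin.symm {W : Subgroup (X ≃ᵢ X)} {x : X} {D : ℝ} {k : X ≃ᵢ X} (h : Twin W x D k) :
    Twin W (k x) D k⁻¹ :=
  ⟨W.inv_mem h.mem, h.pos, by rw [IsometryEquiv.inv_apply_self, dist_comm, h.dist_eq],
    h.fin.translate h.mem⟩

lemma Twin.conj {W : Subgroup (X ≃ᵢ X)} {x : X} {D : ℝ} {k w : X ≃ᵢ X} (h : Twin W x D k)
    (hw : w ∈ W) : Twin W (w x) D (w * k * w⁻¹) :=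
  ⟨W.mul_mem (W.mul_mem hw h.mem) (W.inv_mem hw), h.pos, by
    rw [IsometryEquiv.mul_apply, IsometryEquiv.inv_apply_self, IsometryEquiv.mul_apply,
      w.dist_eq, h.dist_eq], h.fin.translate hw⟩

/-- If `K` contains the stabilizer in `W` of finitely many balls with finite `W`-orbits, then
`K ∩ W` has finite index in `W`, so finiteness of orbits passes from `K` to `W`. -/
lemma FinOrb.of_subgroup {W K : Subgroup (X ≃ᵢ X)} {Q : Set (X × ℝ)} (hQ : Q.Finite)
    (hK : ∀ g ∈ W, (∀ q ∈ Q, g '' ball q.1 q.2 = ball q.1 q.2) → g ∈ K)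
    (hfin : ∀ q ∈ Q, FinOrb W q.1 q.2) {x : X} {D : ℝ} (hx : FinOrb K x D) :
    FinOrb W x D := by
  have : Finite Q := hQ
  let act : (X ≃ᵢ X) → Q → Set X := fun g q => g '' ball q.1.1 q.1.2
  have hT : (act '' (W : Set (X ≃ᵢ X))).Finite := by
    refine (Set.Finite.pi' (fun q : Q => hfin q.1 q.2)).subset ?_
    rintro _ ⟨g, hg, rfl⟩ q
    exact ⟨g, hg, (g.image_ball _ _).symm⟩
  choose! σ hσW hσ using (fun t ht => ht : ∀ t ∈ act '' (W : Set (X ≃ᵢ X)), ∃ g, g ∈ W ∧ act g = t)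
  refine (hT.biUnion fun t _ => hx.image fun S => σ t '' S).subset ?_
  rintro _ ⟨g, hg, rfl⟩
  have ht : act g ∈ act '' (W : Set (X ≃ᵢ X)) := ⟨g, hg, rfl⟩
  refine mem_biUnion ht ⟨_, ⟨(σ (act g))⁻¹ * g, ?_, rfl⟩, ?_⟩
  · refine hK _ (W.mul_mem (W.inv_mem (hσW _ ht)) hg) fun q hq => ?_
    have e : σ (act g) '' ball q.1 q.2 = g '' ball q.1 q.2 := congrFun (hσ _ ht) ⟨q, hq⟩
    rw [IsometryEquiv.coe_mul, image_comp, ← e, ← image_comp, ← IsometryEquiv.coe_mul]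
    simp
  · dsimp only
    rw [IsometryEquiv.image_ball, IsometryEquiv.mul_apply, IsometryEquiv.apply_inv_self]

/-! ### Orbits of balls and the swap map -/

/-- The set of `W`-images of the ball of radius `D` around `p`. -/
def orbitBalls (W : Subgroup (X ≃ᵢ X)) (p : X) (D : ℝ) : Set (Set X) :=
  (fun g : X ≃ᵢ X => ball (g p) D) '' (W : Set (X ≃ᵢ X))

lemma image_mem_orbitBalls {W : Subgroup (X ≃ᵢ X)} {p : X} {D : ℝ} {g : X ≃ᵢ X} (hg : g ∈ W)
    {S : Set X} (hS : S ∈ orbitBalls W p D) : g '' S ∈ orbitBalls W p D := by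
  obtain ⟨k, hk, rfl⟩ := hS
  exact ⟨g * k, W.mul_mem hg hk, (g.image_ball _ _).symm⟩

/-- The permutation action of `W` on an orbit of balls. -/
def permHom (W : Subgroup (X ≃ᵢ X)) (p : X) (D : ℝ) :
    W →* Equiv.Perm (orbitBalls W p D) where
  toFun g :=
    { toFun := fun S => ⟨g.1 '' S.1, image_mem_orbitBalls g.2 S.2⟩
      invFun := fun S => ⟨⇑(g.1⁻¹ : X ≃ᵢ X) '' S.1, image_mem_orbitBalls (W.inv_mem g.2) S.2⟩
      left_inv := fun S => Subtype.ext (by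
        dsimp only
        rw [← image_comp, ← IsometryEquiv.coe_mul]; simp)
      right_inv := fun S => Subtype.ext (by
        dsimp only
        rw [← image_comp, ← IsometryEquiv.coe_mul]; simp) }
  map_one' := by ext1 S; exact Subtype.ext (by simp)
  map_mul' g h := by
    ext1 S
    exact Subtype.ext (image_comp g.1 h.1 S.1)

open Classical in
/-- The map exchanging `ball p D` and `ball (u p) D` by means of `u` and `u⁻¹`, and fixing all
other points. -/
noncomputable def swapFun (p : X) (D : ℝ) (u : X ≃ᵢ X) (x : X) : X :=
  if dist x p < D then u x else if dist x (u p) < D then u⁻¹ x else x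

lemma swapFun_left {p : X} {D : ℝ} {u : X ≃ᵢ X} {x : X} (hx : dist x p < D) :
    swapFun p D u x = u x := by
  simp [swapFun, hx]

lemma swapFun_out {p : X} {D : ℝ} {u : X ≃ᵢ X} {x : X} (h1 : ¬ dist x p < D)
    (h2 : ¬ dist x (u p) < D) : swapFun p D u x = x := by
  simp [swapFun, h1, h2]

section Ultra

variable [IsUltrametricDist X]

lemma dist_lt_of {x y z : X} {D : ℝ} (h1 : dist x y < D) (h2 : dist y z < D) : dist x z < D :=
  (dist_triangle_max x y z).trans_lt (max_lt h1 h2)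

lemma ball_eq_iff {x y : X} {D : ℝ} (hD : 0 < D) : ball x D = ball y D ↔ dist x y < D := by
  constructor
  · intro h
    have : x ∈ ball y D := h ▸ mem_ball_self hD
    exact this
  · intro h
    exact (IsUltrametricDist.ball_eq_of_mem (mem_ball.2 h)).symm

lemma mem_St {Q : Set (X × ℝ)} (hQ : ∀ q ∈ Q, 0 < q.2) {g : X ≃ᵢ X} :
    g ∈ St Q ↔ ∀ q ∈ Q, dist (g q.1) q.1 < q.2 := by
  refine forall₂_congr fun q hq => ?_
  rw [IsometryEquiv.image_ball, ball_eq_iff (hQ q hq)]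

/-- Passing to the minimal members turns a finite set of balls into an FD family with the same
pointwise stabilizer, because an isometry fixing a ball fixes every larger ball. -/
lemma exists_fd {𝓠 : Set (Set X)} (hfin : 𝓠.Finite) (hball : ∀ B ∈ 𝓠, IsBall B) :
    ∃ 𝓑' : Set (Set X), FDFamily 𝓑' ∧ tau (1 : X ≃ᵢ X) 𝓑' = tau 1 𝓠 := by
  refine ⟨{B | Minimal (· ∈ 𝓠) B}, ⟨hfin.subset fun B hB => hB.prop,
    fun B hB => hball B hB.prop, ?_⟩, ?_⟩
  · intro B hB B' hB' hne
    obtain ⟨r, -, x, hx⟩ := hball B hB.prop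
    obtain ⟨r', -, x', hx'⟩ := hball B' hB'.prop
    rcases IsUltrametricDist.ball_subset_trichotomy x x' r r' with h | h | h
    · rw [← hx, ← hx'] at h
      exact absurd (h.antisymm (hB'.le_of_le hB.prop h)) hne
    · rw [← hx, ← hx'] at h
      exact absurd (h.antisymm (hB.le_of_le hB'.prop h)).symm hne
    · rwa [← hx, ← hx'] at h
  · apply Subset.antisymm
    · intro g hg B hB
      obtain ⟨M, hMB, hM⟩ := hfin.exists_le_minimal hB
      obtain ⟨r, hr, x, rfl⟩ := hball B hB
      obtain ⟨s, hs, y, rfl⟩ := hball M hM.prop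
      have hgM := hg _ hM
      simp only [IsometryEquiv.coe_one, image_id] at hgM ⊢
      have hy : y ∈ ball x r := hMB (mem_ball_self hs)
      have hgy : g y ∈ ball x r := hMB (hgM ▸ mem_image_of_mem g (mem_ball_self hs))
      rw [IsometryEquiv.image_ball, ball_eq_iff hr]
      refine dist_lt_of (y := g y) ?_ hgy
      rw [g.dist_eq, dist_comm]
      exact hy
    · exact fun g hg B hB => hg B hB.prop

lemma exists_twin_St {𝓑 : Set (Set X)}
    (h : ¬ ∃ 𝓑' : Set (Set X), FDFamily 𝓑' ∧ Strengthens 𝓑' 𝓑 ∧ ExtremalityProperty X 𝓑')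
    {Q : Set (X × ℝ)} (hQ : Q.Finite) (hpos : ∀ q ∈ Q, 0 < q.2)
    (hQ𝓑 : ∀ B ∈ 𝓑, ∃ q ∈ Q, B = ball q.1 q.2) : ∃ x D k, Twin (St Q) x D k := by
  obtain ⟨𝓑', hFD, htau⟩ := exists_fd (𝓠 := (fun q : X × ℝ => ball q.1 q.2) '' Q)
    (hQ.image _) (by rintro _ ⟨q, hq, rfl⟩; exact ⟨q.2, hpos q hq, q.1, rfl⟩)
  have hSt : tau (1 : X ≃ᵢ X) 𝓑' = (St Q : Set (X ≃ᵢ X)) := by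
    rw [htau]
    ext g
    constructor
    · intro hg q hq
      have := hg _ ⟨q, hq, rfl⟩
      rwa [IsometryEquiv.coe_one, image_id] at this
    · rintro hg _ ⟨q, hq, rfl⟩
      rw [IsometryEquiv.coe_one, image_id]
      exact hg q hq
  have hne : ¬ ExtremalityProperty X 𝓑' := by
    refine fun hE => h ⟨𝓑', hFD, ?_, hE⟩
    intro g hg B hB
    obtain ⟨q, hq, rfl⟩ := hQ𝓑 B hB
    rw [htau] at hg
    exact hg _ ⟨q, hq, rfl⟩
  simp only [ExtremalityProperty, not_forall] at hne
  obtain ⟨C, ⟨c, hc, x, rfl⟩, hC⟩ := hne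
  simp only [Extremal, not_or, not_infinite, not_exists] at hC
  obtain ⟨hfin, hsing⟩ := hC
  rw [orb, hSt] at hfin hsing
  have : ∃ k ∈ St Q, k '' ball x c ≠ ball x c := by
    by_contra! hall
    refine hsing (ball x c) (Subset.antisymm ?_ ?_)
    · rintro _ ⟨g, hg, rfl⟩
      exact hall g hg
    · rintro _ rfl
      exact ⟨1, (St Q).one_mem, by simp⟩
  obtain ⟨k, hk, hkC⟩ := this
  rw [IsometryEquiv.image_ball, Ne, ball_eq_iff hc, not_lt, dist_comm] at hkC
  refine ⟨x, dist x (k x), k, hk, hc.trans_le hkC, rfl, ?_⟩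
  -- the ball of radius `D ≥ c` is determined by the concentric ball of radius `c`
  refine (hfin.image fun S => ⋃ y ∈ S, ball y (dist x (k x))).subset ?_
  rintro _ ⟨g, hg, rfl⟩
  refine ⟨_, ⟨g, hg, rfl⟩, ?_⟩
  dsimp only
  rw [IsometryEquiv.image_ball]
  apply Subset.antisymm
  · refine iUnion₂_subset fun y hy => ?_
    rw [(ball_eq_iff (hc.trans_le hkC)).2 (lt_of_lt_of_le hy hkC)]
  · exact subset_biUnion_of_mem (u := fun y => ball y (dist x (k x))) (mem_ball_self hc)

/-- Twin pairs for `St Q₁` keep existing when `k` is required to fix finitely many further balls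
of finite orbit. -/
lemma exists_twin_fixing {𝓑 : Set (Set X)}
    (h : ¬ ∃ 𝓑' : Set (Set X), FDFamily 𝓑' ∧ Strengthens 𝓑' 𝓑 ∧ ExtremalityProperty X 𝓑')
    {Q₁ : Set (X × ℝ)} (hQ₁ : Q₁.Finite) (hpos₁ : ∀ q ∈ Q₁, 0 < q.2)
    (hQ𝓑 : ∀ B ∈ 𝓑, ∃ q ∈ Q₁, B = ball q.1 q.2)
    {Q : Set (X × ℝ)} (hQ : Q.Finite) (hpos : ∀ q ∈ Q, 0 < q.2)
    (hfin : ∀ q ∈ Q, FinOrb (St Q₁) q.1 q.2) :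
    ∃ x D k, Twin (St Q₁) x D k ∧ ∀ q ∈ Q, dist (k q.1) q.1 < q.2 := by
  have hpos' : ∀ q ∈ Q₁ ∪ Q, 0 < q.2 := fun q hq => hq.elim (hpos₁ q) (hpos q)
  obtain ⟨x, D, k, ht⟩ := exists_twin_St h (hQ₁.union hQ) hpos' fun B hB => by
    obtain ⟨q, hq, e⟩ := hQ𝓑 B hB
    exact ⟨q, Or.inl hq, e⟩
  refine ⟨x, D, k, ⟨fun q hq => ht.mem q (Or.inl hq), ht.pos, ht.dist_eq, ?_⟩,
    fun q hq => (mem_St hpos').1 ht.mem q (Or.inr hq)⟩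
  exact FinOrb.of_subgroup (W := St Q₁) (K := St (Q₁ ∪ Q)) hQ
    (fun g hg hgQ q hq => Or.elim hq (hg q) (hgQ q)) hfin ht.fin

/-- Any finite set of points can be avoided by a twin pair. Otherwise there are infinitely many
twin pairs whose first balls contain a common point, each `kₙ` fixing all earlier balls. These
first balls are then nested, so the second balls are pairwise disjoint; but `kₘ` maps the `n`-th
pair, `n > m`, into the second ball of the `m`-th pair, which therefore meets the finite set. -/
lemma exists_free_twin {𝓑 : Set (Set X)}
    (h : ¬ ∃ 𝓑' : Set (Set X), FDFamily 𝓑' ∧ Strengthens 𝓑' 𝓑 ∧ ExtremalityProperty X 𝓑')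
    {Q₁ : Set (X × ℝ)} (hQ₁ : Q₁.Finite) (hpos₁ : ∀ q ∈ Q₁, 0 < q.2)
    (hQ𝓑 : ∀ B ∈ 𝓑, ∃ q ∈ Q₁, B = ball q.1 q.2) {Z : Set X} (hZ : Z.Finite) :
    ∃ x D k, Twin (St Q₁) x D k ∧ ∀ z ∈ Z, z ∉ ball x D ∧ z ∉ ball (k x) D := by
  classical
  by_contra! hcon
  replace hcon : ∀ x D k, Twin (St Q₁) x D k →
      ∃ z ∈ Z, dist z x < D ∨ dist z (k x) < D := by
    intro x D k ht
    obtain ⟨z, hz, hzz⟩ := hcon x D k ht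
    refine ⟨z, hz, ?_⟩
    by_cases hx : dist z x < D
    · exact Or.inl hx
    · exact Or.inr (hzz hx)
  obtain ⟨f, hP, hr⟩ := exists_seq_of_forall_finset_exists
    (fun t : X × ℝ × (X ≃ᵢ X) => Twin (St Q₁) t.1 t.2.1 t.2.2 ∧ ∃ z : Z, dist z.1 t.1 < t.2.1)
    (fun t t' => dist (t'.2.2 t.1) t.1 < t.2.1) (by
      intro s hs
      obtain ⟨x, D, k, ht, hk⟩ := exists_twin_fixing h hQ₁ hpos₁ hQ𝓑
        (Q := (fun t : X × ℝ × (X ≃ᵢ X) => (t.1, t.2.1)) '' (s : Set (X × ℝ × (X ≃ᵢ X))))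
        (s.finite_toSet.image _)
        (by rintro _ ⟨t, ht, rfl⟩; exact (hs t ht).1.pos)
        (by rintro _ ⟨t, ht, rfl⟩; exact (hs t ht).1.fin)
      replace hk : ∀ t ∈ s, dist (k t.1) t.1 < t.2.1 := fun t ht => hk _ ⟨t, ht, rfl⟩
      obtain ⟨z, hz, hzx | hzx⟩ := hcon x D k ht
      · exact ⟨(x, D, k), ⟨ht, ⟨z, hz⟩, hzx⟩, hk⟩
      · refine ⟨(k x, D, k⁻¹), ⟨ht.symm, ⟨z, hz⟩, hzx⟩, fun t hts => ?_⟩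
        have := hk t hts
        rw [dist_apply_inv, dist_comm] at this
        exact this)
  have : Finite Z := hZ
  choose z hz using fun n => (hP n).2
  obtain ⟨z₀, hinf⟩ := Finite.exists_infinite_fiber z
  have hlt : ∀ m n, m < n → z m = z n → (f n).2.1 < (f m).2.1 := by
    intro m n hmn e
    by_contra! hle
    have hm := hz m
    have hn := hz n
    rw [e, dist_comm] at hm
    have h1 : dist (f m).1 (f n).1 < (f n).2.1 := dist_lt_of (hm.trans_le hle) hn
    have h2 := (hr m n hmn).trans_le hle
    have h3 : dist ((f n).2.2 (f n).1) ((f n).2.2 (f m).1) < (f n).2.1 := by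
      rw [IsometryEquiv.dist_eq, dist_comm]; exact h1
    have h4 := dist_lt_of h3 (dist_lt_of h2 h1)
    rw [dist_comm, (hP n).1.dist_eq] at h4
    exact lt_irrefl _ h4
  have hclose : ∀ m n, m < n → z m = z n → dist (f n).1 (f m).1 < (f m).2.1 := by
    intro m n hmn e
    have hm := hz m
    have hn := hz n
    rw [dist_comm] at hn
    rw [e] at hm
    exact dist_lt_of (hn.trans (hlt m n hmn e)) hm
  have hz' : ∀ m : z ⁻¹' {z₀}, ∃ z' : Z, dist z'.1 ((f m).2.2 (f m).1) < (f m).2.1 := by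
    rintro ⟨m, hm⟩
    obtain ⟨n, hn, hmn⟩ := (infinite_coe_iff.1 hinf).exists_gt m
    have e : z m = z n := by
      rw [mem_preimage, mem_singleton_iff] at hm hn
      rw [hm, hn]
    have hD := hlt m n hmn e
    have hcl := hclose m n hmn e
    obtain ⟨z', hz'Z, hz'⟩ := hcon _ _ _ ((hP n).1.conj (hP m).1.mem)
    rw [IsometryEquiv.mul_apply, IsometryEquiv.inv_apply_self, IsometryEquiv.mul_apply] at hz'
    refine ⟨⟨z', hz'Z⟩, ?_⟩
    have hcl' : dist ((f m).2.2 (f n).1) ((f m).2.2 (f m).1) < (f m).2.1 := by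
      rw [IsometryEquiv.dist_eq]; exact hcl
    rcases hz' with hz' | hz'
    · exact dist_lt_of (hz'.trans hD) hcl'
    · refine dist_lt_of (hz'.trans hD) (dist_lt_of ?_ hcl')
      rw [IsometryEquiv.dist_eq, dist_comm, (hP n).1.dist_eq]
      exact hD
  choose z' hz' using hz'
  refine not_injective_infinite_finite z' ?_
  have key : ∀ m n : z ⁻¹' {z₀}, m.1 < n.1 → z' m ≠ z' n := by
    rintro ⟨m, hm⟩ ⟨n, hn⟩ hmn e'
    have e : z m = z n := by
      rw [mem_preimage, mem_singleton_iff] at hm hn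
      rw [hm, hn]
    have hD := hlt m n hmn e
    have h1 := hz' ⟨m, hm⟩
    have h2 := hz' ⟨n, hn⟩
    rw [← e'] at h2
    have h3 : dist ((f n).2.2 (f n).1) (f n).1 < (f m).2.1 := by
      rw [dist_comm, (hP n).1.dist_eq]; exact hD
    have h4 := dist_lt_of (dist_lt_of (h2.trans hD) h3) (hclose m n hmn e)
    rw [dist_comm] at h4
    have h5 := dist_lt_of h4 h1
    rw [(hP m).1.dist_eq] at h5
    exact lt_irrefl _ h5
  intro m n e
  rcases lt_trichotomy m.1 n.1 with hmn | hmn | hmn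
  · exact absurd e (key m n hmn)
  · exact Subtype.ext hmn
  · exact absurd e.symm (key n m hmn)

/-! ### Swapping a twin pair -/

lemma not_both {p : X} {D : ℝ} {u : X ≃ᵢ X} (hD : dist p (u p) = D) {x : X}
    (hx : dist x (u p) < D) : ¬ dist x p < D := by
  intro h
  rw [dist_comm] at h
  exact absurd hD (dist_lt_of h hx).ne

lemma swapFun_right {p : X} {D : ℝ} {u : X ≃ᵢ X} (hD : dist p (u p) = D) {x : X}
    (hx : dist x (u p) < D) : swapFun p D u x = u⁻¹ x := by
  simp [swapFun, hx, not_both hD hx]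

lemma swapFun_swapFun {p : X} {D : ℝ} {u : X ≃ᵢ X} (hD : dist p (u p) = D) :
    Function.Involutive (swapFun p D u) := by
  intro x
  by_cases h1 : dist x p < D
  · rw [swapFun_left h1, swapFun_right hD (by rwa [u.dist_eq]), IsometryEquiv.inv_apply_self]
  by_cases h2 : dist x (u p) < D
  · rw [swapFun_right hD h2, swapFun_left, IsometryEquiv.apply_inv_self]
    rwa [dist_comm, ← dist_apply_inv, dist_comm]
  · rw [swapFun_out h1 h2, swapFun_out h1 h2]

lemma dist_swapFun_le {p : X} {D : ℝ} {u : X ≃ᵢ X} (hD : dist p (u p) = D) (x y : X) :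
    dist (swapFun p D u x) (swapFun p D u y) ≤ dist x y := by
  have cross : ∀ a b : X, dist a p < D → dist b (u p) < D → dist a b = D := by
    intro a b ha hb
    apply le_antisymm
    · refine (dist_triangle_max a p b).trans (max_le ha.le ?_)
      refine (dist_triangle_max p (u p) b).trans (max_le hD.le ?_)
      rw [dist_comm]; exact hb.le
    · by_contra! hlt
      rw [dist_comm] at ha
      exact absurd hD (dist_lt_of (dist_lt_of ha hlt) hb).ne
  have inv_mem : ∀ a : X, dist a (u p) < D → dist (u⁻¹ a) p < D := by
    intro a ha
    rwa [dist_comm, ← dist_apply_inv, dist_comm]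
  -- a point outside both balls is equidistant from all points of the two balls
  have out : ∀ a b c : X, (dist a p < D ∨ dist a (u p) < D) →
      (dist c p < D ∨ dist c (u p) < D) → ¬ dist b p < D → ¬ dist b (u p) < D →
      dist c b ≤ dist a b := by
    intro a b c ha hc h1 h2
    have hca : dist c a ≤ D := by
      rcases ha with ha | ha <;> rcases hc with hc | hc
      · exact (dist_lt_of hc (by rwa [dist_comm])).le
      · rw [dist_comm]; exact (cross _ _ ha hc).le
      · exact (cross _ _ hc ha).le
      · exact (dist_lt_of hc (by rwa [dist_comm])).le
    have hab : D ≤ dist a b := by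
      by_contra! hlt
      rw [dist_comm] at hlt
      rcases ha with ha | ha
      · exact h1 (dist_lt_of hlt ha)
      · exact h2 (dist_lt_of hlt ha)
    exact (dist_triangle_max c a b).trans (max_le (hca.trans hab) le_rfl)
  by_cases x1 : dist x p < D
  · have ux : dist (u x) (u p) < D := by rwa [u.dist_eq]
    rw [swapFun_left x1]
    by_cases y1 : dist y p < D
    · rw [swapFun_left y1, u.dist_eq]
    by_cases y2 : dist y (u p) < D
    · rw [swapFun_right hD y2, cross x y x1 y2, dist_comm, cross _ _ (inv_mem y y2) ux]
    · rw [swapFun_out y1 y2]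
      exact out _ _ _ (Or.inl x1) (Or.inr ux) y1 y2
  by_cases x2 : dist x (u p) < D
  · rw [swapFun_right hD x2]
    by_cases y1 : dist y p < D
    · have uy : dist (u y) (u p) < D := by rwa [u.dist_eq]
      rw [swapFun_left y1, cross _ _ (inv_mem x x2) uy, dist_comm, cross _ _ y1 x2]
    by_cases y2 : dist y (u p) < D
    · rw [swapFun_right hD y2, IsometryEquiv.dist_eq]
    · rw [swapFun_out y1 y2]
      exact out _ _ _ (Or.inr x2) (Or.inl (inv_mem x x2)) y1 y2
  · rw [swapFun_out x1 x2]
    by_cases y1 : dist y p < D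
    · have uy : dist (u y) (u p) < D := by rwa [u.dist_eq]
      rw [swapFun_left y1, dist_comm, dist_comm x]
      exact out _ _ _ (Or.inl y1) (Or.inr uy) x1 x2
    by_cases y2 : dist y (u p) < D
    · rw [swapFun_right hD y2, dist_comm, dist_comm x]
      exact out _ _ _ (Or.inr y2) (Or.inl (inv_mem y y2)) x1 x2
    · rw [swapFun_out y1 y2]

lemma exists_swap {p : X} {D : ℝ} {u : X ≃ᵢ X} (hD : dist p (u p) = D) :
    ∃ s : X ≃ᵢ X, ∀ x, s x = swapFun p D u x := by
  refine ⟨⟨(swapFun_swapFun hD).toPerm, Isometry.of_dist_eq fun x y => ?_⟩, fun x => rfl⟩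
  refine le_antisymm (dist_swapFun_le hD x y) ?_
  have := dist_swapFun_le hD (swapFun p D u x) (swapFun p D u y)
  rwa [swapFun_swapFun hD, swapFun_swapFun hD] at this

/-! ### The sign character on a finite orbit of balls -/

/-- For `γ ∈ W = St Q₁`, the `W`-conjugacy class of `γ` is nowhere dense: near any `g ∈ W` lies
`g * s`, where `s` swaps a twin pair avoiding the finitely many relevant points, and `g`, `g * s`
have opposite signs as permutations of the finite orbit of that pair. -/
lemma isNowhereDense_class {𝓑 : Set (Set X)}
    (h : ¬ ∃ 𝓑' : Set (Set X), FDFamily 𝓑' ∧ Strengthens 𝓑' 𝓑 ∧ ExtremalityProperty X 𝓑')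
    {Q₁ : Set (X × ℝ)} (hQ₁ : Q₁.Finite) (hpos₁ : ∀ q ∈ Q₁, 0 < q.2)
    (hQ𝓑 : ∀ B ∈ 𝓑, ∃ q ∈ Q₁, B = ball q.1 q.2) {γ : X ≃ᵢ X} (hγ : γ ∈ St Q₁) :
    IsNowhereDense {g : X ≃ᵢ X | ∃ w ∈ St Q₁, g = w * γ * w⁻¹} := by
  classical
  set A := {g : X ≃ᵢ X | ∃ w ∈ St Q₁, g = w * γ * w⁻¹} with hA
  have hAW : ∀ g ∈ A, g ∈ St Q₁ := by
    rintro _ ⟨w, hw, rfl⟩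
    exact (St Q₁).mul_mem ((St Q₁).mul_mem hw hγ) ((St Q₁).inv_mem hw)
  rw [IsNowhereDense, eq_empty_iff_forall_notMem]
  intro g₀ hg₀
  obtain ⟨g, hgU, hgA⟩ := mem_closure_iff.1 (interior_subset hg₀) _ isOpen_interior hg₀
  obtain ⟨Q₂, hQ₂, hpos₂, hnb⟩ := exists_nb_subset isOpen_interior hgU
  obtain ⟨p, D, u, ht, hfree⟩ := exists_free_twin h hQ₁ hpos₁ hQ𝓑
    (Z := Prod.fst '' (Q₁ ∪ Q₂)) ((hQ₁.union hQ₂).image _)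
  obtain ⟨s, hs⟩ := exists_swap ht.dist_eq
  have hsfix : ∀ q ∈ Q₁ ∪ Q₂, s q.1 = q.1 := by
    intro q hq
    obtain ⟨h1, h2⟩ := hfree q.1 ⟨q, hq, rfl⟩
    rw [hs, swapFun_out h1 h2]
  have hsW : s ∈ St Q₁ := (mem_St hpos₁).2 fun q hq => by
    rw [hsfix q (Or.inl hq), dist_self]; exact hpos₁ q hq
  have hgs : g * s ∈ closure A := interior_subset (hnb fun q hq => by
    rw [IsometryEquiv.mul_apply, hsfix q (Or.inr hq), dist_self]; exact hpos₂ q hq)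
  have hOfin : (orbitBalls (St Q₁) p D).Finite := ht.fin
  have : Fintype (orbitBalls (St Q₁) p D) := hOfin.fintype
  choose! c hcW hc using (fun S hS => hS :
    ∀ S ∈ orbitBalls (St Q₁) p D, ∃ k : X ≃ᵢ X, k ∈ St Q₁ ∧ ball (k p) D = S)
  obtain ⟨g', hg'nb, hg'A⟩ := mem_closure_iff.1 hgs _
    (isOpen_nb (g * s) (hOfin.image fun S => (c S p, D)))
    (by rintro _ ⟨S, hS, rfl⟩; rw [dist_self]; exact ht.pos)
  let ρ := permHom (St Q₁) p D
  have hsign : ∀ a (ha : a ∈ A), Equiv.Perm.sign (ρ ⟨a, hAW a ha⟩) =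
      Equiv.Perm.sign (ρ ⟨γ, hγ⟩) := by
    rintro _ ⟨w, hw, rfl⟩
    have : (⟨w * γ * w⁻¹, hAW _ ⟨w, hw, rfl⟩⟩ : St Q₁) = ⟨w, hw⟩ * ⟨γ, hγ⟩ * ⟨w, hw⟩⁻¹ := rfl
    rw [this, map_mul, map_mul, map_mul, map_mul, map_inv, map_inv, mul_comm, inv_mul_cancel_left]
  have heq : ρ ⟨g', hAW g' hg'A⟩ = ρ (⟨g, hAW g hgA⟩ * ⟨s, hsW⟩) := by
    ext1 S
    apply Subtype.ext
    change g' '' S.1 = (g * s) '' S.1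
    have := hg'nb _ ⟨S.1, S.2, rfl⟩
    rw [← hc S.1 S.2, IsometryEquiv.image_ball, IsometryEquiv.image_ball, ball_eq_iff ht.pos]
    exact this
  let F₁ : orbitBalls (St Q₁) p D := ⟨ball p D, 1, (St Q₁).one_mem, rfl⟩
  let F₂ : orbitBalls (St Q₁) p D := ⟨ball (u p) D, u, ht.mem, rfl⟩
  have hF : F₁ ≠ F₂ := by
    intro e
    have e' : ball p D = ball (u p) D := congrArg Subtype.val e
    rw [ball_eq_iff ht.pos, ht.dist_eq] at e'
    exact lt_irrefl _ e'
  have hswap : ρ ⟨s, hsW⟩ = Equiv.swap F₁ F₂ := by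
    ext1 S
    apply Subtype.ext
    change s '' S.1 = _
    have hsp : s p = u p := by rw [hs, swapFun_left (by rw [dist_self]; exact ht.pos)]
    have hsup : s (u p) = p := by
      rw [hs, swapFun_right ht.dist_eq (by rw [dist_self]; exact ht.pos),
        IsometryEquiv.inv_apply_self]
    by_cases h1 : S = F₁
    · subst h1
      rw [Equiv.swap_apply_left]
      change s '' ball p D = ball (u p) D
      rw [IsometryEquiv.image_ball, hsp]
    by_cases h2 : S = F₂
    · subst h2
      rw [Equiv.swap_apply_right]
      change s '' ball (u p) D = ball p D
      rw [IsometryEquiv.image_ball, hsup]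
    rw [Equiv.swap_apply_of_ne_of_ne h1 h2]
    have hcS := hc S.1 S.2
    rw [← hcS, IsometryEquiv.image_ball, hs, swapFun_out]
    · exact fun hlt => h1 (Subtype.ext (hcS.symm.trans ((ball_eq_iff ht.pos).2 hlt)))
    · exact fun hlt => h2 (Subtype.ext (hcS.symm.trans ((ball_eq_iff ht.pos).2 hlt)))
  have e1 := hsign g' hg'A
  rw [heq, map_mul, map_mul, hsign g hgA, hswap, Equiv.Perm.sign_swap hF] at e1
  rcases Int.units_eq_one_or (Equiv.Perm.sign (ρ ⟨γ, hγ⟩)) with e | e <;> rw [e] at e1 <;>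
    exact absurd e1 (by decide)

end Ultra

end UltraProof

open UltraGen in
theorem no_open_subgroup_has_comeager_conjugacy_class
    {X : Type*} [MetricSpace X] [TopologicalSpace.SeparableSpace X] [CompleteSpace X]
    [IsUltrametricDist X]
    (𝓑 : Set (Set X)) (h𝓑 : FDFamily 𝓑)
    (h : ¬ ∃ 𝓑' : Set (Set X), FDFamily 𝓑' ∧ Strengthens 𝓑' 𝓑 ∧ ExtremalityProperty X 𝓑') :
    ∀ V : Subgroup (X ≃ᵢ X), IsOpen (V : Set (X ≃ᵢ X)) →
      ∀ γ : V, {g : V | ∃ h' : V, h' * γ * h'⁻¹ = g} ∉ residual V := by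
  intro V hV γ hres
  have : PolishSpace (X ≃ᵢ X) := UltraProof.polishSpace_iso
  have : PolishSpace V := hV.polishSpace
  obtain ⟨QV, hQVfin, hQVpos, hQV⟩ := UltraProof.exists_nb_subset hV V.one_mem
  have hcent : ∀ B ∈ 𝓑, ∃ q : X × ℝ, 0 < q.2 ∧ B = ball q.1 q.2 := fun B hB => by
    obtain ⟨r, hr, x, hx⟩ := h𝓑.2.1 B hB
    exact ⟨(x, r), hr, hx⟩
  choose b hbpos hb using hcent
  let Q : Set (X × ℝ) := QV ∪ range fun B : 𝓑 => b B.1 B.2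
  have : Finite 𝓑 := h𝓑.1
  have hQfin : Q.Finite := hQVfin.union (Set.finite_range _)
  have hQpos : ∀ q ∈ Q, 0 < q.2 := by
    rintro q (hq | ⟨B, rfl⟩)
    · exact hQVpos q hq
    · exact hbpos B.1 B.2
  have hQ𝓑 : ∀ B ∈ 𝓑, ∃ q ∈ Q, B = ball q.1 q.2 := fun B hB =>
    ⟨b B hB, Or.inr ⟨⟨B, hB⟩, rfl⟩, hb B hB⟩
  let W := UltraProof.St Q
  have hWopen : IsOpen (W : Set (X ≃ᵢ X)) := by
    have : (W : Set (X ≃ᵢ X)) = UltraProof.nb 1 Q := by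
      ext g
      exact UltraProof.mem_St hQpos
    rw [this]
    exact UltraProof.isOpen_nb 1 hQfin
  -- `code g` records where `g⁻¹` sends the centres in `Q`, up to the radii in `Q`;
  -- elements with the same code lie in the same right coset of `W`
  obtain ⟨s, hsc, hs⟩ := TopologicalSpace.exists_countable_dense X
  have : Countable s := hsc
  have : Finite Q := hQfin
  have hnear : ∀ (g : X ≃ᵢ X) (q : Q), ∃ a : s, dist (g⁻¹ q.1.1) a < q.1.2 := fun g q => by
    obtain ⟨a, ha, has⟩ := Metric.dense_iff.1 hs (g⁻¹ q.1.1) q.1.2 (hQpos q q.2)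
    rw [mem_ball, dist_comm] at ha
    exact ⟨⟨a, has⟩, ha⟩
  choose code hcode using hnear
  have hcoset : ∀ g g', code g = code g' → g * g'⁻¹ ∈ W := by
    intro g g' e
    refine (UltraProof.mem_St hQpos).2 fun q hq => ?_
    rw [IsometryEquiv.mul_apply, UltraProof.dist_apply_inv]
    have h1 := hcode g ⟨q, hq⟩
    have h2 := hcode g' ⟨q, hq⟩
    rw [e, dist_comm] at h1
    exact UltraProof.dist_lt_of h2 h1
  let rep : range code → (X ≃ᵢ X) := fun t => t.2.choose
  have hrep : ∀ t, code (rep t) = t := fun t => t.2.choose_spec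
  let A : range code → Set (X ≃ᵢ X) := fun t =>
    {g | g ∈ W ∧ ∃ w ∈ W, g = w * (rep t * γ * (rep t)⁻¹) * w⁻¹}
  have hmeagre : IsMeagre (⋃ t, A t) := by
    refine isMeagre_iUnion fun t => IsNowhereDense.isMeagre ?_
    by_cases hmem : rep t * γ * (rep t)⁻¹ ∈ W
    · exact (UltraProof.isNowhereDense_class h hQfin hQpos hQ𝓑 hmem).mono fun g hg => hg.2
    · convert isNowhereDense_empty
      rw [eq_empty_iff_forall_notMem]
      rintro g ⟨hgW, w, hw, rfl⟩
      refine hmem ?_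
      have := W.mul_mem (W.mul_mem (W.inv_mem hw) hgW) hw
      simpa [mul_assoc] using this
  have hmeagreV : IsMeagre (((↑) : V → X ≃ᵢ X) ⁻¹' ⋃ t, A t) :=
    hmeagre.preimage_of_isOpenMap continuous_subtype_val hV.isOpenMap_subtype_val
  have hdense := dense_of_mem_residual (Filter.inter_mem hres hmeagreV)
  obtain ⟨g, hgW, ⟨k, hk⟩, hgA⟩ := hdense.inter_open_nonempty _
    (hWopen.preimage continuous_subtype_val) ⟨(1 : V), W.one_mem⟩
  refine hgA (mem_iUnion.2 ⟨⟨code k, k, rfl⟩, hgW, ?_⟩)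
  refine ⟨_, hcoset k.1 (rep ⟨code k, k, rfl⟩) (hrep ⟨code k, k, rfl⟩).symm, ?_⟩
  rw [← hk]
  simp [mul_assoc]
end
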